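/- Let A ∈ {0,1}^{n×n} be a random symmetric adjacency matrix with zero diagonal such that A_{uv} ~ Bernoulli(P_{uv}) independently for all u > v, where P ∈ [0,1]^{n×n} is symmetric, and set p_max = max over u ≥ v of P_{uv}. For any C' > 0 there exist constants C > 0 and sufficiently large constants C1 < C2 such that, with probability at least 1 − n^{−C'}, simultaneously for all τ ∈ [C1·(n·p_max + 1), C2·(n·p_max + 1)], the operator norm bound ‖L(A_τ) − L(P_τ)‖ ≤ C·√(log(e·(n·p_max + 1))/(n·p_max + 1)) holds. -/

import Mathlib

open scoped BigOperators
open Filter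

namespace SBM

noncomputable section

/-- Adjacency matrices of graphs on `n` nodes. -/
abbrev Adj (n : ℕ) := Fin n → Fin n → Bool

/-- 0/1 real value of an entry of the adjacency matrix. -/
def aVal {n : ℕ} (A : Adj n) (u v : Fin n) : ℝ := if A u v then 1 else 0

/-- Probability weight of one adjacency matrix under the SBM with edge
probability matrix `P`: the entries above the diagonal are independent
Bernoulli, the matrix is symmetric with zero diagonal. -/
def weight {n : ℕ} (P : Matrix (Fin n) (Fin n) ℝ) (A : Adj n) : ℝ :=
  if (∀ u, A u u = false) ∧ (∀ u v, A u v = A v u) then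
    ∏ u : Fin n, ∏ v : Fin n,
      if u < v then (if A u v then P u v else 1 - P u v) else 1
  else 0

/-- Probability of a set of adjacency matrices under the SBM with edge
probability matrix `P`. -/
def prob {n : ℕ} (P : Matrix (Fin n) (Fin n) ℝ) (S : Set (Adj n)) : ℝ :=
  ∑ A : Adj n, S.indicator (weight P) A

/-- The edge probability matrix `P u v = B (σ u) (σ v)`. -/
def pMat {n k : ℕ} (B : Matrix (Fin k) (Fin k) ℝ) (σ : Fin n → Fin k) :
    Matrix (Fin n) (Fin n) ℝ := fun u v => B (σ u) (σ v)

/-- Size of the `i`-th community of a label assignment. -/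
def comSize {n k : ℕ} (σ : Fin n → Fin k) (i : Fin k) : ℝ :=
  ((Finset.univ.filter fun u => σ u = i).card : ℝ)

/-- Hamming loss `ℓ0`. -/
def l0 {n k : ℕ} (σ1 σ2 : Fin n → Fin k) : ℝ :=
  ((Finset.univ.filter fun u => σ1 u ≠ σ2 u).card : ℝ) / n

/-- Misclassification proportion: minimum of `ℓ0` over relabelings. -/
def misclass {n k : ℕ} (σh σ : Fin n → Fin k) : ℝ :=
  ⨅ π : Equiv.Perm (Fin k), l0 σh (fun u => π (σ u))

/-- Euclidean norm of a vector. -/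
def sqnorm {n : ℕ} (x : Fin n → ℝ) : ℝ := Real.sqrt (∑ i, x i ^ 2)

/-- Operator (spectral) norm of a square matrix. -/
def opNorm {n : ℕ} (M : Matrix (Fin n) (Fin n) ℝ) : ℝ :=
  sSup { t : ℝ | ∃ x : Fin n → ℝ, sqnorm x = 1 ∧ t = sqnorm (M.mulVec x) }

/-- The `k`-th largest singular value of a square matrix, via the
Courant–Fischer max-min characterization. -/
def kthSingular {n : ℕ} (M : Matrix (Fin n) (Fin n) ℝ) (k : ℕ) : ℝ :=
  sSup { t : ℝ | 0 ≤ t ∧ ∃ V : Submodule ℝ (Fin n → ℝ),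
    Module.finrank ℝ V = k ∧ ∀ x ∈ V, t * sqnorm x ≤ sqnorm (M.mulVec x) }

/-- The Rényi divergence of order 1/2, `I*`. -/
def renyiHalf (n : ℕ) (a b : ℝ) : ℝ :=
  -2 * Real.log (Real.sqrt ((a / n) * (b / n)) +
    Real.sqrt ((1 - a / n) * (1 - b / n)))

/-- The balanced parameter space `Θ₀(n,k,a,b,β)`. -/
def Theta0 (n k : ℕ) (a b β : ℝ) :
    Set (Matrix (Fin k) (Fin k) ℝ × (Fin n → Fin k)) :=
  { p | (∀ i, (n : ℝ) / (β * k) - 1 ≤ comSize p.2 i ∧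
          comSize p.2 i ≤ β * n / k + 1) ∧
        (∀ i, p.1 i i = a / n) ∧ ∀ i j, i ≠ j → p.1 i j = b / n }

/-- Average of the off-diagonal entries of a `k × k` matrix. -/
def offDiagAvg {k : ℕ} (B : Matrix (Fin k) (Fin k) ℝ) : ℝ :=
  (1 / ((k : ℝ) * ((k : ℝ) - 1))) *
    ∑ i : Fin k, ∑ j : Fin k, if i ≠ j then B i j else 0

/-- The general parameter space `Θ(n,k,a,b,λ,β;α)`. -/
def ThetaGen (n k : ℕ) (a b lam β α : ℝ) :
    Set (Matrix (Fin k) (Fin k) ℝ × (Fin n → Fin k)) :=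
  { p | (∀ i, (n : ℝ) / (β * k) - 1 ≤ comSize p.2 i ∧
          comSize p.2 i ≤ β * n / k + 1) ∧
        (∀ i j, p.1 i j = p.1 j i) ∧
        (∀ i j, 0 ≤ p.1 i j ∧ p.1 i j ≤ 1) ∧
        b / (α * n) ≤ offDiagAvg p.1 ∧
        (∀ i j, i ≠ j → p.1 i j ≤ b / n) ∧
        (∃ i j, i ≠ j ∧ p.1 i j = b / n) ∧
        (∀ i, a / n ≤ p.1 i i) ∧ (∃ i, p.1 i i = a / n) ∧
        (∀ i, p.1 i i ≤ α * a / n) ∧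
        lam ≤ kthSingular (pMat p.1 p.2) k }

/-- The estimated community `C̃ᵢᵘ` (node `u` itself is excluded). -/
def cluster {n k : ℕ} (u : Fin n) (s : Fin n → Fin k) (i : Fin k) :
    Finset (Fin n) :=
  Finset.univ.filter fun v => v ≠ u ∧ s v = i

/-- Number of edges within a set of nodes. -/
def edgesWithin {n : ℕ} (A : Adj n) (C : Finset (Fin n)) : ℝ :=
  (∑ v ∈ C, ∑ w ∈ C, aVal A v w) / 2

/-- Number of edges between two disjoint sets of nodes. -/
def edgesBetween {n : ℕ} (A : Adj n) (C D : Finset (Fin n)) : ℝ :=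
  ∑ v ∈ C, ∑ w ∈ D, aVal A v w

/-- The connectivity estimates `B̂ᵢⱼᵘ` of Algorithm 1, based on the initial
assignment `s = σ⁰ᵤ`. -/
def hatB {n k : ℕ} (A : Adj n) (u : Fin n) (s : Fin n → Fin k) (i j : Fin k) :
    ℝ :=
  if i = j then
    edgesWithin A (cluster u s i) /
      (((cluster u s i).card : ℝ) * (((cluster u s i).card : ℝ) - 1) / 2)
  else
    edgesBetween A (cluster u s i) (cluster u s j) /
      (((cluster u s i).card : ℝ) * ((cluster u s j).card : ℝ))

/-- `â_u = n · minᵢ B̂ᵢᵢᵘ`. -/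
def hata {n k : ℕ} (A : Adj n) (u : Fin n) (s : Fin n → Fin k) : ℝ :=
  n * ⨅ i : Fin k, hatB A u s i i

/-- `b̂_u = n · maxᵢ≠ⱼ B̂ᵢⱼᵘ`. -/
def hatb {n k : ℕ} (A : Adj n) (u : Fin n) (s : Fin n → Fin k) : ℝ :=
  n * sSup { x : ℝ | ∃ i j : Fin k, i ≠ j ∧ x = hatB A u s i j }

/-- `t = ½ log (â (1 − b̂/n) / (b̂ (1 − â/n)))`. -/
def tStat (n : ℕ) (ha hb : ℝ) : ℝ :=
  Real.log (ha * (1 - hb / n) / (hb * (1 - ha / n))) / 2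

/-- `ρ = −(1/(2t)) log (((â/n)e^{−t} + 1 − â/n)/((b̂/n)e^{t} + 1 − b̂/n))`. -/
def rhoStat (n : ℕ) (ha hb t : ℝ) : ℝ :=
  -(Real.log (((ha / n) * Real.exp (-t) + 1 - ha / n) /
      ((hb / n) * Real.exp t + 1 - hb / n))) / (2 * t)

/-- Penalized vote of node `u` for label `l`. -/
def vote {n k : ℕ} (A : Adj n) (u : Fin n) (s : Fin n → Fin k) (ρ : ℝ)
    (l : Fin k) : ℝ :=
  (∑ v ∈ cluster u s l, aVal A u v) - ρ * ((cluster u s l).card : ℝ)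

/-- `lbl` maximizes the penalized vote of node `u`. -/
def VoteMax {n k : ℕ} (A : Adj n) (u : Fin n) (s : Fin n → Fin k) (ρ : ℝ)
    (lbl : Fin k) : Prop :=
  ∀ l : Fin k, vote A u s ρ l ≤ vote A u s ρ lbl

/-- `|{v : σU_{u1}(v) = l} ∩ {v : σU_u(v) = σU_u(u)}|`. -/
def consensusCount {n k : ℕ} (σU : Fin n → Fin n → Fin k) (u1 u : Fin n)
    (l : Fin k) : ℕ :=
  (Finset.univ.filter fun v => σU u1 v = l ∧ σU u v = σU u u).card

/-- Specification of the refinement-plus-consensus scheme of Algorithm 1, with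
an arbitrary family of penalties `ρ`.  `σ0 u` is the initial assignment
`σ⁰ᵤ`, `σU u` is the refined assignment `σ̂ᵤ`, `σhat` is the final output. -/
def RefineSpec {n k : ℕ} (A : Adj n) (σ0 σU : Fin n → Fin n → Fin k)
    (ρ : Fin n → ℝ) (σhat : Fin n → Fin k) : Prop :=
  (∀ u v, v ≠ u → σU u v = σ0 u v) ∧
  (∀ u, VoteMax A u (σ0 u) (ρ u) (σU u u)) ∧
  ∀ hn : 0 < n,
    σhat ⟨0, hn⟩ = σU ⟨0, hn⟩ ⟨0, hn⟩ ∧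
    ∀ u, u ≠ ⟨0, hn⟩ →
      ∀ l : Fin k, consensusCount σU ⟨0, hn⟩ u l ≤
        consensusCount σU ⟨0, hn⟩ u (σhat u)

/-- Algorithm 1 with the standard data-driven penalties. -/
def AlgorithmOne {n k : ℕ} (A : Adj n) (σ0 σU : Fin n → Fin n → Fin k)
    (σhat : Fin n → Fin k) : Prop :=
  RefineSpec A σ0 σU
    (fun u => rhoStat n (hata A u (σ0 u)) (hatb A u (σ0 u))
      (tStat n (hata A u (σ0 u)) (hatb A u (σ0 u)))) σhat

/-- Algorithm 1 with the truncated `t_u` (truncation level `log (2/ε0)`). -/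
def AlgorithmOneTrunc (ε0 : ℝ) {n k : ℕ} (A : Adj n)
    (σ0 σU : Fin n → Fin n → Fin k) (σhat : Fin n → Fin k) : Prop :=
  RefineSpec A σ0 σU
    (fun u => rhoStat n (hata A u (σ0 u)) (hatb A u (σ0 u))
      (min (tStat n (hata A u (σ0 u)) (hatb A u (σ0 u)))
        (Real.log (2 / ε0)))) σhat

/-- Algorithm 1 with known `a` and `b`. -/
def AlgorithmOneKnown (a b : ℝ) {n k : ℕ} (A : Adj n)
    (σ0 σU : Fin n → Fin n → Fin k) (σhat : Fin n → Fin k) : Prop :=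
  RefineSpec A σ0 σU (fun _ => rhoStat n a b (tStat n a b)) σhat

/-- Algorithm 1 with known `a`, `b` and truncated `t_u`. -/
def AlgorithmOneKnownTrunc (a b ε0 : ℝ) {n k : ℕ} (A : Adj n)
    (σ0 σU : Fin n → Fin n → Fin k) (σhat : Fin n → Fin k) : Prop :=
  RefineSpec A σ0 σU
    (fun _ => rhoStat n a b (min (tStat n a b) (Real.log (2 / ε0)))) σhat

/-- The initializer `σ0 A u` (that is, `σ⁰ᵤ`) only uses the data `A₋ᵤ`. -/
def LocalInit {n k : ℕ} (σ0 : Adj n → Fin n → Fin n → Fin k) : Prop :=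
  ∀ (A A' : Adj n) (u : Fin n),
    (∀ v w, v ≠ u → w ≠ u → A v w = A' v w) → σ0 A u = σ0 A' u

/-- Condition 1: the initializer is, with probability at least
`1 − C0 n^{−(1+δ)}`, within misclassification proportion `γ` of the truth,
uniformly over the parameter space and the left-out node. -/
def Condition1 {n k : ℕ}
    (Θ : Set (Matrix (Fin k) (Fin k) ℝ × (Fin n → Fin k)))
    (σ0 : Adj n → Fin n → Fin n → Fin k) (C0 δ γ : ℝ) : Prop :=
  ∀ p ∈ Θ, ∀ u : Fin n,
    1 - C0 * (n : ℝ) ^ (-(1 + δ)) ≤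
      prob (pMat p.1 p.2) { A | misclass p.2 (σ0 A u) ≤ γ }

/-- Degree of a node. -/
def degree {n : ℕ} (A : Adj n) (u : Fin n) : ℝ := ∑ v, aVal A u v

/-- Average degree `d̄`. -/
def avgDeg {n : ℕ} (A : Adj n) : ℝ := (∑ u, degree A u) / n

/-- Trimming operator `T_τ`: zero out rows/columns of high-degree nodes. -/
def trim {n : ℕ} (A : Adj n) (τ : ℝ) : Matrix (Fin n) (Fin n) ℝ :=
  fun u v => if τ ≤ degree A u ∨ τ ≤ degree A v then 0 else aVal A u v

/-- Regularized adjacency matrix `A_τ = A + (τ/n)·11ᵀ`. -/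
def addReg {n : ℕ} (A : Adj n) (τ : ℝ) : Matrix (Fin n) (Fin n) ℝ :=
  fun u v => aVal A u v + τ / n

/-- Normalized Laplacian `L(M)_{uv} = M_{uv}/√(r_u r_v)`. -/
def lap {n : ℕ} (M : Matrix (Fin n) (Fin n) ℝ) : Matrix (Fin n) (Fin n) ℝ :=
  fun u v => M u v / Real.sqrt ((∑ w, M u w) * (∑ w, M v w))

/-- `U` is a matrix whose columns are orthonormal eigenvectors of `M`
corresponding to the `k` leading (largest in absolute value) eigenvalues. -/
def LeadingEigenvectors {n k : ℕ} (M : Matrix (Fin n) (Fin n) ℝ)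
    (U : Matrix (Fin n) (Fin k) ℝ) : Prop :=
  ∃ μ : Fin k → ℝ,
    (∀ i j : Fin k, (∑ u, U u i * U u j) = if i = j then (1 : ℝ) else 0) ∧
    (∀ j : Fin k, M.mulVec (fun u => U u j) = fun u => μ j * U u j) ∧
    ∀ (x : Fin n → ℝ) (c : ℝ), M.mulVec x = (fun u => c * x u) →
      (∀ j, (∑ u, x u * U u j) = 0) → x ≠ 0 → ∀ j, |c| ≤ |μ j|

/-- Distance between two rows of `U`. -/
def rowDist {n k : ℕ} (U : Matrix (Fin n) (Fin k) ℝ) (v w : Fin n) : ℝ :=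
  Real.sqrt (∑ j, (U v j - U w j) ^ 2)

/-- Number of points of `S` within distance `r` of `v`. -/
def ballCount {n k : ℕ} (U : Matrix (Fin n) (Fin k) ℝ) (r : ℝ)
    (S : Finset (Fin n)) (v : Fin n) : ℕ :=
  (S.filter fun w => rowDist U w v < r).card

/-- Specification of the greedy clustering scheme (Algorithm 2) with critical
radius `r`, applied to the rows of `U`. -/
def GreedyCluster {n k : ℕ} (U : Matrix (Fin n) (Fin k) ℝ) (r : ℝ)
    (σhat : Fin n → Fin k) : Prop :=
  ∃ (S : ℕ → Finset (Fin n)) (t : Fin k → Fin n) (Ch : Fin k → Finset (Fin n)),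
    S 0 = Finset.univ ∧
    (∀ i : Fin k,
      ((S i.val).Nonempty → t i ∈ S i.val ∧
        ∀ v ∈ S i.val,
          ballCount U r (S i.val) v ≤ ballCount U r (S i.val) (t i)) ∧
      Ch i = (S i.val).filter (fun v => rowDist U v (t i) < r) ∧
      S (i.val + 1) = S i.val \ Ch i) ∧
    (∀ i : Fin k, ∀ u ∈ Ch i, σhat u = i) ∧
    ∀ u ∈ S k, ∀ j : Fin k,
      (∑ v ∈ Ch (σhat u), rowDist U u v) / ((Ch (σhat u)).card : ℝ) ≤
        (∑ v ∈ Ch j, rowDist U u v) / ((Ch j).card : ℝ)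

/-- `σhat` is a possible output of `USC(τ)` (with tuning constant `μ`). -/
def USCOutput {n k : ℕ} (A : Adj n) (τ μ : ℝ) (σhat : Fin n → Fin k) : Prop :=
  ∃ U : Matrix (Fin n) (Fin k) ℝ,
    LeadingEigenvectors (trim A τ) U ∧
    GreedyCluster U (μ * Real.sqrt ((k : ℝ) / n)) σhat

/-- `σhat` is a possible output of `NSC(τ)` (with tuning constant `μ`). -/
def NSCOutput {n k : ℕ} (A : Adj n) (τ μ : ℝ) (σhat : Fin n → Fin k) : Prop :=
  ∃ U : Matrix (Fin n) (Fin k) ℝ,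
    LeadingEigenvectors (lap (addReg A τ)) U ∧
    GreedyCluster U (μ * Real.sqrt ((k : ℝ) / n)) σhat

/-- The initializer `σ0 A u` is obtained by applying `USC(Cτ · d̄)` to the
leave-one-out matrix `A₋ᵤ` (identified with a graph on `n − 1` nodes via an
injection `e` avoiding `u`). -/
def USCInitDeg {n k : ℕ} (Cτ μ : ℝ) (σ0 : Adj n → Fin n → Fin n → Fin k) :
    Prop :=
  ∀ (A : Adj n) (u : Fin n), ∃ (m : ℕ) (e : Fin m → Fin n) (s' : Fin m → Fin k),
    m + 1 = n ∧ Function.Injective e ∧ (∀ w, e w ≠ u) ∧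
    USCOutput (fun v w => A (e v) (e w))
      (Cτ * avgDeg (fun v w => A (e v) (e w))) μ s' ∧
    ∀ w, σ0 A u (e w) = s' w

/-- The initializer `σ0 A u` is obtained by applying `NSC(Cτ · d̄)` to `A₋ᵤ`. -/
def NSCInitDeg {n k : ℕ} (Cτ μ : ℝ) (σ0 : Adj n → Fin n → Fin n → Fin k) :
    Prop :=
  ∀ (A : Adj n) (u : Fin n), ∃ (m : ℕ) (e : Fin m → Fin n) (s' : Fin m → Fin k),
    m + 1 = n ∧ Function.Injective e ∧ (∀ w, e w ≠ u) ∧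
    NSCOutput (fun v w => A (e v) (e w))
      (Cτ * avgDeg (fun v w => A (e v) (e w))) μ s' ∧
    ∀ w, σ0 A u (e w) = s' w

/-- The initializer `σ0 A u` is obtained by applying `USC(τ)` (with a fixed
regularization level `τ`) to `A₋ᵤ`. -/
def USCInitTau {n k : ℕ} (τ μ : ℝ) (σ0 : Adj n → Fin n → Fin n → Fin k) :
    Prop :=
  ∀ (A : Adj n) (u : Fin n), ∃ (m : ℕ) (e : Fin m → Fin n) (s' : Fin m → Fin k),
    m + 1 = n ∧ Function.Injective e ∧ (∀ w, e w ≠ u) ∧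
    USCOutput (fun v w => A (e v) (e w)) τ μ s' ∧
    ∀ w, σ0 A u (e w) = s' w

/-- The initializer `σ0 A u` is obtained by applying `NSC(τ)` (with a fixed
regularization level `τ`) to `A₋ᵤ`. -/
def NSCInitTau {n k : ℕ} (τ μ : ℝ) (σ0 : Adj n → Fin n → Fin n → Fin k) :
    Prop :=
  ∀ (A : Adj n) (u : Fin n), ∃ (m : ℕ) (e : Fin m → Fin n) (s' : Fin m → Fin k),
    m + 1 = n ∧ Function.Injective e ∧ (∀ w, e w ≠ u) ∧
    NSCOutput (fun v w => A (e v) (e w)) τ μ s' ∧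
    ∀ w, σ0 A u (e w) = s' w

/-- The minimax-rate threshold `exp(−(1−coef)·n·I*/2)` for `k = 2` and
`exp(−(1−coef)·n·I*/(βk))` for `k ≥ 3`. -/
def rate (β : ℝ) (n k : ℕ) (a b coef : ℝ) : ℝ :=
  if k = 2 then Real.exp (-((1 - coef) * ((n : ℝ) * renyiHalf n a b)) / 2)
  else Real.exp (-((1 - coef) * ((n : ℝ) * renyiHalf n a b)) / (β * k))

/-- `sup_{(B,σ)∈Θ₀} P{ℓ(σ,σ̂) ≥ rate} → 0` as `n → ∞`. -/
def SupSmall0 (β : ℝ) (k : ℕ → ℕ) (a b coef : ℕ → ℝ)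
    (σhat : ∀ n, Adj n → Fin n → Fin (k n)) : Prop :=
  ∀ ε' : ℝ, 0 < ε' → ∀ᶠ n in atTop,
    ∀ p ∈ Theta0 n (k n) (a n) (b n) β,
      prob (pMat p.1 p.2)
        { A | rate β n (k n) (a n) (b n) (coef n) ≤ misclass (σhat n A) p.2 }
        ≤ ε'

/-- `sup_{(B,σ)∈Θ} P{ℓ(σ,σ̂) ≥ rate} → 0` as `n → ∞`. -/
def SupSmallGen (β α : ℝ) (k : ℕ → ℕ) (a b lam coef : ℕ → ℝ)
    (σhat : ∀ n, Adj n → Fin n → Fin (k n)) : Prop :=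
  ∀ ε' : ℝ, 0 < ε' → ∀ᶠ n in atTop,
    ∀ p ∈ ThetaGen n (k n) (a n) (b n) (lam n) β α,
      prob (pMat p.1 p.2)
        { A | rate β n (k n) (a n) (b n) (coef n) ≤ misclass (σhat n A) p.2 }
        ≤ ε'

/-- The running assumption `0 < b < a ≤ (1−ε) n`. -/
def Baseline (ε : ℝ) (n : ℕ) (a b : ℝ) : Prop :=
  0 < b ∧ b < a ∧ a ≤ (1 - ε) * n

/-- `a ≍ b`. -/
def Comparable (a b : ℕ → ℝ) : Prop :=
  ∃ c1 c2 : ℝ, 0 < c1 ∧ ∀ n, c1 * b n ≤ a n ∧ a n ≤ c2 * b n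

/-- The constant `C_ε`. -/
def Ceps (ε : ℝ) : ℝ := (10 / 3) * ((2 - ε) / ((ε / 2) * Real.log (2 / ε)))

/-- The constant `c_ε`. -/
def ceps (ε : ℝ) : ℝ := min (1 / (10 * Ceps ε)) (ε / (2 - ε))

/-- The maximal entry `p_max` of a matrix. -/
def pmax {n : ℕ} (P : Matrix (Fin n) (Fin n) ℝ) : ℝ :=
  sSup { x : ℝ | ∃ u v, x = P u v }

/-- The matrix agreeing with `M` on `J × J` and zero elsewhere. -/
def restrictM {n : ℕ} (M : Matrix (Fin n) (Fin n) ℝ) (J : Finset (Fin n)) :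
    Matrix (Fin n) (Fin n) ℝ :=
  fun u v => if u ∈ J ∧ v ∈ J then M u v else 0

/-- The real-valued adjacency matrix. -/
def adjMat {n : ℕ} (A : Adj n) : Matrix (Fin n) (Fin n) ℝ := fun u v => aVal A u v

end

end SBM

namespace SBM

open Filter

/-!
For vertex sets `S` and `T`, the larger of size `m`, Chernoff's bound controls the sum of `A - P`
over `S × T`. As `(e n / m) ^ m` bounds the number of choices of each set, a union bound makes all
these deviations small at once on an event of probability at least `1 - n ^ (-C')`, and on that
event the rest is deterministic.

Cut a vector `z` into its dyadic levels `2 ^ i ≤ |z u| < 2 ^ (i + 1)`. In the quadratic form of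
`A - P` at `z`, the blocks between levels at distance at most about `log₂ √d` are controlled by the
deviations, and the remaining blocks by the row sums of `|A - P|` with a gain of `1 / √d`. Hence the
form is at most a multiple of `√(log (e d) / d) * ∑ u, W u * z u ^ 2` with `W u = degree A u + d`.

After rescaling by the row sums of `A_τ`, which dominate `W`, this compares `L(A_τ)` with `P_τ` in
the same normalization. Testing the polarized form against the constant vector shows that the row
sums of `A_τ` and `P_τ` are close in mean square, so that replacing one normalization by the other
is a perturbation of the same order.
-/

section RandomGraph

open Finset Real

variable {n : ℕ} {P : Matrix (Fin n) (Fin n) ℝ} {A : Adj n}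

/-- `A` is the adjacency matrix of a simple graph; these matrices carry the law `weight P`. -/
def IsGraph (A : Adj n) : Prop :=
  (∀ u, A u u = false) ∧ ∀ u v, A u v = A v u

/-- The potential edges, each listed once, with its smaller endpoint first. -/
def upperPairs (n : ℕ) : Finset (Fin n × Fin n) := {e | e.1 < e.2}

/-- The edge set of a graph, as a set of potential edges. -/
def edges (A : Adj n) : Finset (Fin n × Fin n) := {e ∈ upperPairs n | A e.1 e.2}

/-- The graph with a given set of potential edges, inverse to `edges`. -/
def ofEdges (t : Finset (Fin n × Fin n)) : Adj n :=
  fun u v => decide ((u, v) ∈ t ∨ (v, u) ∈ t)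

/-- Expectation of a random variable under the law `weight P` of the random graph. -/
def expect (P : Matrix (Fin n) (Fin n) ℝ) (f : Adj n → ℝ) : ℝ := ∑ A, weight P A * f A

lemma mem_upperPairs {e : Fin n × Fin n} : e ∈ upperPairs n ↔ e.1 < e.2 := by
  simp [upperPairs]

lemma sum_sum_eq_sum_diag_add_sum_upperPairs (f : Fin n → Fin n → ℝ) :
    ∑ u, ∑ v, f u v = ∑ u, f u u + ∑ e ∈ upperPairs n, (f e.1 e.2 + f e.2 e.1) := by
  have split (u v) : f u v =
      (if u = v then f u v else 0) + (if u < v then f u v else 0) +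
        if v < u then f u v else 0 := by
    rcases lt_trichotomy u v with h | rfl | h
    · simp [h, h.ne, h.not_gt]
    · simp
    · simp [h, h.ne', h.not_gt]
  have below : ∑ u, ∑ v, (if v < u then f u v else 0) =
      ∑ u, ∑ v, if u < v then f v u else 0 := sum_comm
  conv_lhs => enter [2, u, 2, v]; rw [split]
  simp only [sum_add_distrib, below, upperPairs, sum_filter, Fintype.sum_prod_type, sum_ite_eq,
    mem_univ, if_true, add_assoc]

lemma isGraph_ofEdges {t : Finset (Fin n × Fin n)} (ht : t ⊆ upperPairs n) :
    IsGraph (ofEdges t) := by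
  refine ⟨fun u => ?_, fun u v => by simp only [ofEdges, or_comm]⟩
  have : (u, u) ∉ t := fun h => lt_irrefl u (mem_upperPairs.1 (ht h))
  simp [ofEdges, this]

lemma edges_ofEdges {t : Finset (Fin n × Fin n)} (ht : t ⊆ upperPairs n) :
    edges (ofEdges t) = t := by
  ext ⟨u, v⟩
  simp only [edges, ofEdges, mem_filter, mem_upperPairs, decide_eq_true_eq]
  constructor
  · rintro ⟨huv, h | h⟩
    · exact h
    · exact absurd (mem_upperPairs.1 (ht h)) huv.not_gt
  · exact fun h => ⟨mem_upperPairs.1 (ht h), Or.inl h⟩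

lemma IsGraph.ofEdges_edges (hA : IsGraph A) : ofEdges (edges A) = A := by
  funext u v
  rw [Bool.eq_iff_iff]
  simp only [edges, ofEdges, mem_filter, mem_upperPairs, decide_eq_true_eq]
  rcases lt_trichotomy u v with h | rfl | h
  · simp [h, h.not_gt]
  · simp [hA.1]
  · simp [h, h.not_gt, hA.2 u v]

lemma IsGraph.weight_eq (hA : IsGraph A) :
    weight P A = ∏ e ∈ upperPairs n, if A e.1 e.2 then P e.1 e.2 else 1 - P e.1 e.2 := by
  rw [upperPairs, prod_filter, Fintype.prod_prod_type]
  exact if_pos hA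

lemma weight_eq_zero_of_not_isGraph (hA : ¬ IsGraph A) : weight P A = 0 := if_neg hA

lemma weight_nonneg (hP : ∀ u v, 0 ≤ P u v ∧ P u v ≤ 1) (A : Adj n) : 0 ≤ weight P A := by
  by_cases hA : IsGraph A
  · rw [hA.weight_eq]
    refine prod_nonneg fun e _ => ?_
    split_ifs
    exacts [(hP _ _).1, sub_nonneg.2 (hP _ _).2]
  · exact (weight_eq_zero_of_not_isGraph hA).ge

lemma expect_prod (P : Matrix (Fin n) (Fin n) ℝ) (g : Fin n × Fin n → Bool → ℝ) :
    expect P (fun A => ∏ e ∈ upperPairs n, g e (A e.1 e.2)) =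
      ∏ e ∈ upperPairs n, (P e.1 e.2 * g e true + (1 - P e.1 e.2) * g e false) := by
  classical
  have graphs : expect P (fun A => ∏ e ∈ upperPairs n, g e (A e.1 e.2)) =
      ∑ A with IsGraph A, weight P A * ∏ e ∈ upperPairs n, g e (A e.1 e.2) := by
    refine (sum_filter_of_ne fun A _ h => ?_).symm
    contrapose! h
    rw [weight_eq_zero_of_not_isGraph h, zero_mul]
  rw [graphs, prod_add]
  refine sum_nbij' edges ofEdges (fun A _ => mem_powerset.2 (filter_subset _ _))
    (fun t ht => mem_filter.2 ⟨mem_univ _, isGraph_ofEdges (mem_powerset.1 ht)⟩)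
    (fun A hA => (mem_filter.1 hA).2.ofEdges_edges)
    (fun t ht => edges_ofEdges (mem_powerset.1 ht)) fun A hA => ?_
  rw [(mem_filter.1 hA).2.weight_eq, ← prod_mul_distrib, edges, ← filter_not, prod_filter,
    prod_filter, ← prod_mul_distrib]
  refine prod_congr rfl fun e _ => ?_
  cases A e.1 e.2 <;> simp

lemma sum_weight (P : Matrix (Fin n) (Fin n) ℝ) : ∑ A, weight P A = 1 := by
  simpa [expect] using expect_prod P fun _ _ => 1

lemma prob_nonneg (hP : ∀ u v, 0 ≤ P u v ∧ P u v ≤ 1) (E : Set (Adj n)) : 0 ≤ prob P E :=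
  sum_nonneg fun _ _ => Set.indicator_nonneg (fun A _ => weight_nonneg hP A) _

lemma prob_mono (hP : ∀ u v, 0 ≤ P u v ∧ P u v ≤ 1) {E F : Set (Adj n)} (hEF : E ⊆ F) :
    prob P E ≤ prob P F :=
  sum_le_sum fun A _ => Set.indicator_le_indicator_of_subset hEF (weight_nonneg hP) A

lemma one_sub_sum_prob_le_prob {ι : Type*} (hP : ∀ u v, 0 ≤ P u v ∧ P u v ≤ 1) {G : Set (Adj n)}
    (I : Finset ι) (bad : ι → Set (Adj n))
    (hG : ∀ A, IsGraph A → (∀ i ∈ I, A ∉ bad i) → A ∈ G) :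
    1 - ∑ i ∈ I, prob P (bad i) ≤ prob P G := by
  classical
  have hw := weight_nonneg hP
  have covered (A : Adj n) :
      weight P A ≤ G.indicator (weight P) A + ∑ i ∈ I, (bad i).indicator (weight P) A := by
    have hbad : ∀ i ∈ I, 0 ≤ (bad i).indicator (weight P) A :=
      fun i _ => Set.indicator_nonneg (fun A _ => hw A) A
    by_cases hA : IsGraph A ∧ ∀ i ∈ I, A ∉ bad i
    · rw [Set.indicator_of_mem (hG A hA.1 hA.2)]
      exact le_add_of_nonneg_right (sum_nonneg hbad)
    refine le_add_of_nonneg_of_le (Set.indicator_nonneg (fun A _ => hw A) A) ?_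
    by_cases hgraph : IsGraph A
    · obtain ⟨i, hi, hAi⟩ : ∃ i ∈ I, A ∈ bad i := by simpa [hgraph] using hA
      calc weight P A = (bad i).indicator (weight P) A := (Set.indicator_of_mem hAi _).symm
        _ ≤ _ := single_le_sum hbad hi
    · rw [weight_eq_zero_of_not_isGraph hgraph]
      exact sum_nonneg hbad
  have total := sum_le_sum fun A (_ : A ∈ univ) => covered A
  rw [sum_weight, sum_add_distrib, sum_comm] at total
  exact sub_le_iff_le_add.2 total

lemma prob_lt_abs_le (hP : ∀ u v, 0 ≤ P u v ∧ P u v ≤ 1) (X : Adj n → ℝ) {θ : ℝ} (hθ : 0 ≤ θ)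
    (c : ℝ) :
    prob P {A | c < |X A|} ≤
      exp (-(θ * c)) * (expect P (fun A => exp (θ * X A)) + expect P fun A => exp (-θ * X A)) := by
  simp only [prob, expect, ← sum_add_distrib, mul_sum]
  refine sum_le_sum fun A _ => ?_
  have hw := weight_nonneg hP A
  refine Set.indicator_apply_le' (fun hA => ?_) fun _ => by positivity
  have large : exp (θ * c) ≤ exp (θ * X A) + exp (-θ * X A) :=
    calc exp (θ * c) ≤ exp (θ * |X A|) := by gcongr; exact hA.le
      _ ≤ exp (θ * X A) + exp (-θ * X A) := by
        rcases abs_choice (X A) with h | h <;> rw [h]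
        · linarith [exp_pos (-θ * X A)]
        · rw [mul_neg, ← neg_mul]
          linarith [exp_pos (θ * X A)]
  calc weight P A = exp (-(θ * c)) * (weight P A * exp (θ * c)) := by
        rw [mul_left_comm, ← exp_add, neg_add_cancel, exp_zero, mul_one]
    _ ≤ exp (-(θ * c)) * (weight P A * (exp (θ * X A) + exp (-θ * X A))) := by gcongr
    _ = _ := by rw [mul_add (weight P A)]

lemma exp_sub_one_sub_le (x : ℝ) : exp x - 1 - x ≤ x ^ 2 * exp |x| := by
  have hneg : 1 - x ≤ exp (-x) := by linarith [add_one_le_exp (-x)]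
  have hmul : exp x - 1 ≤ x * exp x := by
    have : (1 - x) * exp x ≤ 1 := by
      calc (1 - x) * exp x ≤ exp (-x) * exp x := by gcongr
        _ = 1 := by rw [← exp_add, neg_add_cancel, exp_zero]
    linarith
  rcases le_total 0 x with hx | hx
  · rw [abs_of_nonneg hx]
    nlinarith
  · nlinarith [sq_nonneg x, add_one_le_exp x, one_le_exp (abs_nonneg x)]

lemma bernoulli_mgf_le {p : ℝ} (hp : 0 ≤ p) (c : ℝ) :
    p * exp (c * (1 - p)) + (1 - p) * exp (c * (0 - p)) ≤ exp (p * (c ^ 2 * exp |c|)) := by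
  have hexp : exp (c * (1 - p)) = exp (-(c * p)) * exp c := by rw [← exp_add]; ring_nf
  calc p * exp (c * (1 - p)) + (1 - p) * exp (c * (0 - p))
      = exp (-(c * p)) * (p * (exp c - 1) + 1) := by rw [hexp]; ring_nf
    _ ≤ exp (-(c * p)) * exp (p * (exp c - 1)) := by gcongr; exact add_one_le_exp _
    _ = exp (p * (exp c - 1 - c)) := by rw [← exp_add]; ring_nf
    _ ≤ exp (p * (c ^ 2 * exp |c|)) := by gcongr; exact exp_sub_one_sub_le c

lemma expect_exp_sum_le (hP : ∀ u v, 0 ≤ P u v ∧ P u v ≤ 1) (c : Fin n × Fin n → ℝ) :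
    expect P (fun A => exp (∑ e ∈ upperPairs n, c e * (aVal A e.1 e.2 - P e.1 e.2))) ≤
      exp (∑ e ∈ upperPairs n, P e.1 e.2 * (c e ^ 2 * exp |c e|)) := by
  simp only [exp_sum, aVal]
  rw [expect_prod P fun e b => exp (c e * ((if b then 1 else 0) - P e.1 e.2))]
  refine prod_le_prod (fun e _ => ?_) fun e _ => ?_
  · have := sub_nonneg.2 (hP e.1 e.2).2
    have := (hP e.1 e.2).1
    positivity
  · simpa using bernoulli_mgf_le (hP e.1 e.2).1 (c e)

/-- The centred adjacency matrix `A - P` with its deterministic diagonal removed. -/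
def noise (P : Matrix (Fin n) (Fin n) ℝ) (A : Adj n) : Matrix (Fin n) (Fin n) ℝ :=
  fun u v => if u = v then 0 else aVal A u v - P u v

lemma IsGraph.aVal_comm (hA : IsGraph A) (u v : Fin n) : aVal A u v = aVal A v u := by
  rw [aVal, aVal, hA.2]

/-- How often the unordered pair `e` is counted in the ordered pairs from `S` to `T`. -/
def multiplicity (S T : Finset (Fin n)) (e : Fin n × Fin n) : ℝ :=
  (if e.1 ∈ S ∧ e.2 ∈ T then 1 else 0) + if e.2 ∈ S ∧ e.1 ∈ T then 1 else 0

lemma sum_sum_eq_sum_univ_ite (S T : Finset (Fin n)) (f : Fin n → Fin n → ℝ) :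
    ∑ u ∈ S, ∑ v ∈ T, f u v = ∑ u, ∑ v, if u ∈ S ∧ v ∈ T then f u v else 0 := by
  simp [ite_and, sum_ite_mem]

lemma sum_sum_noise_eq (hsymm : ∀ u v, P u v = P v u) (hA : IsGraph A) (S T : Finset (Fin n)) :
    ∑ u ∈ S, ∑ v ∈ T, noise P A u v =
      ∑ e ∈ upperPairs n, multiplicity S T e * (aVal A e.1 e.2 - P e.1 e.2) := by
  refine (sum_sum_eq_sum_univ_ite S T (noise P A)).trans ?_
  rw [sum_sum_eq_sum_diag_add_sum_upperPairs, sum_eq_zero, zero_add]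
  · refine sum_congr rfl fun e he => ?_
    have hne := (mem_upperPairs.1 he).ne
    simp only [noise, if_neg hne, if_neg hne.symm, multiplicity, hA.aVal_comm e.2,
      hsymm e.2, add_mul, ite_mul, one_mul, zero_mul]
  · simp [noise]

lemma sum_multiplicity_le (S T : Finset (Fin n)) :
    ∑ e ∈ upperPairs n, multiplicity S T e ≤ S.card * T.card := by
  have total := sum_sum_eq_sum_univ_ite S T fun _ _ => 1
  rw [sum_sum_eq_sum_diag_add_sum_upperPairs] at total
  have diag : 0 ≤ ∑ u : Fin n, if u ∈ S ∧ u ∈ T then (1 : ℝ) else 0 :=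
    sum_nonneg fun u _ => by positivity
  simp only [sum_const, nsmul_eq_mul, mul_one] at total
  rw [total]
  exact le_add_of_nonneg_left diag

lemma expect_exp_mul_sum_sum_noise_le (hsymm : ∀ u v, P u v = P v u)
    (hP : ∀ u v, 0 ≤ P u v ∧ P u v ≤ 1) {p : ℝ} (hp₀ : 0 ≤ p) (hp : ∀ u v, P u v ≤ p)
    (S T : Finset (Fin n)) (θ : ℝ) :
    expect P (fun A => exp (θ * ∑ u ∈ S, ∑ v ∈ T, noise P A u v)) ≤
      exp (2 * (p * S.card * T.card) * (θ ^ 2 * exp (2 * |θ|))) := by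
  have linear : expect P (fun A => exp (θ * ∑ u ∈ S, ∑ v ∈ T, noise P A u v)) =
      expect P fun A => exp (∑ e ∈ upperPairs n,
        θ * multiplicity S T e * (aVal A e.1 e.2 - P e.1 e.2)) := by
    refine sum_congr rfl fun A _ => ?_
    by_cases hA : IsGraph A
    · simp only [sum_sum_noise_eq hsymm hA, mul_sum, mul_assoc]
    · simp only [weight_eq_zero_of_not_isGraph hA, zero_mul]
  rw [linear]
  refine (expect_exp_sum_le hP _).trans (exp_le_exp.2 ?_)
  have term (e : Fin n × Fin n) :
      P e.1 e.2 * ((θ * multiplicity S T e) ^ 2 * exp |θ * multiplicity S T e|) ≤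
        2 * p * (θ ^ 2 * exp (2 * |θ|)) * multiplicity S T e := by
    have hq₀ : 0 ≤ multiplicity S T e := by unfold multiplicity; positivity
    have hq₂ : multiplicity S T e ≤ 2 := by unfold multiplicity; split_ifs <;> norm_num
    generalize multiplicity S T e = q at hq₀ hq₂
    calc P e.1 e.2 * ((θ * q) ^ 2 * exp |θ * q|)
        = P e.1 e.2 * ((q * q) * θ ^ 2 * exp (q * |θ|)) := by
          rw [abs_mul, abs_of_nonneg hq₀]; ring_nf
      _ ≤ p * ((2 * q) * θ ^ 2 * exp (2 * |θ|)) := by gcongr; exact hp _ _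
      _ = 2 * p * (θ ^ 2 * exp (2 * |θ|)) * q := by ring
  calc _ ≤ 2 * p * (θ ^ 2 * exp (2 * |θ|)) * ∑ e ∈ upperPairs n, multiplicity S T e := by
        rw [mul_sum]
        exact sum_le_sum fun e _ => term e
    _ ≤ 2 * p * (θ ^ 2 * exp (2 * |θ|)) * (S.card * T.card) := by
        gcongr
        exact sum_multiplicity_le S T
    _ = _ := by ring

end RandomGraph

section Discrepancy

open Finset Matrix Real

/-- The logarithm of `(e n / m) ^ m`, which bounds the number of sets of at most `m` among `n`
points. -/
noncomputable def subsetEntropy (n m : ℝ) : ℝ := m * (1 + log (n / m))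

/-- The deviation scale for the noise between sets of sizes `s` and `t` in a graph on `n` nodes
with expected degrees at most `d`. -/
noncomputable def discScale (n d s t : ℝ) : ℝ := max s t + √(d * s * t * √(max s t / n))

/-- The parameter `θ` at which Chernoff's bound is applied to a pair of sets of sizes `s` and `t`:
it makes `θ` times the deviation scale proportional to the entropy of the pair. -/
noncomputable def chernoffParam (n d s t : ℝ) : ℝ :=
  subsetEntropy n (max s t) / (8 * discScale n d s t)

/-- The sum of `M` over any combinatorial rectangle is at most `K` deviation scales. -/
def HasDiscrepancy {ι : Type*} [Fintype ι] (M : Matrix ι ι ℝ) (d K : ℝ) : Prop :=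
  ∀ S T : Finset ι,
    |∑ u ∈ S, ∑ v ∈ T, M u v| ≤ K * discScale (Fintype.card ι) d S.card T.card

section Scale

variable {n d s t : ℝ}

lemma subsetEntropy_nonneg {m : ℝ} (hm : 0 < m) (hmn : m ≤ n) : 0 ≤ subsetEntropy n m := by
  have : 0 ≤ log (n / m) := log_nonneg ((one_le_div hm).2 hmn)
  unfold subsetEntropy
  positivity

lemma log_le_subsetEntropy {m : ℝ} (hm : 1 ≤ m) (hmn : m ≤ n) : log n ≤ subsetEntropy n m := by
  have hm₀ : 0 < m := one_pos.trans_le hm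
  rw [subsetEntropy, log_div (hm₀.trans_le hmn).ne' hm₀.ne']
  nlinarith [log_le_log hm₀ hmn, log_le_sub_one_of_pos hm₀]

lemma max_le_discScale : max s t ≤ discScale n d s t :=
  le_add_of_nonneg_right (sqrt_nonneg _)

lemma discScale_mono (hn : 0 ≤ n) (hd : 0 ≤ d) (hs : 0 ≤ s) (ht : 0 ≤ t) {s' t' : ℝ} (hss : s ≤ s')
    (htt : t ≤ t') : discScale n d s t ≤ discScale n d s' t' := by
  have hs' := hs.trans hss
  have ht' := ht.trans htt
  unfold discScale
  gcongr

lemma chernoffParam_nonneg (hm : 0 < max s t) (hmn : max s t ≤ n) :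
    0 ≤ chernoffParam n d s t :=
  div_nonneg (subsetEntropy_nonneg hm hmn)
    (mul_nonneg (by norm_num) (hm.le.trans max_le_discScale))

lemma chernoffParam_mul_discScale (hm : 0 < max s t) :
    chernoffParam n d s t * discScale n d s t = subsetEntropy n (max s t) / 8 := by
  have := hm.trans_le (max_le_discScale (n := n) (d := d))
  unfold chernoffParam
  field_simp

lemma sqrt_mul_one_sub_log_mul_exp_le {x : ℝ} (hx : 0 < x) :
    √x * (1 - log x) * exp ((1 - log x) / 4) ≤ 8 := by
  set L := 1 - log x with hL
  have hsqrt : √x = exp ((1 - L) / 2) := by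
    rw [hL, sub_sub_cancel, exp_half, exp_log hx]
  have hLexp : L ≤ 4 * exp (L / 4) := by linarith [add_one_le_exp (L / 4)]
  have hexp : exp (1 / 2) ≤ 2 := by
    rw [exp_half]
    exact sqrt_le_iff.2 ⟨by norm_num, by linarith [exp_one_lt_d9]⟩
  calc √x * L * exp (L / 4)
      ≤ √x * (4 * exp (L / 4)) * exp (L / 4) := by gcongr
    _ = 4 * exp (1 / 2) := by
        rw [hsqrt, mul_left_comm, mul_assoc, ← exp_add, ← exp_add]
        ring_nf
    _ ≤ 8 := by linarith

lemma chernoffParam_variance_le (hm : 0 < max s t) (hmn : max s t ≤ n) :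
    2 * (d / n * s * t) * (chernoffParam n d s t ^ 2 * exp (2 * chernoffParam n d s t)) ≤
      subsetEntropy n (max s t) / 4 := by
  have hn : 0 < n := hm.trans_le hmn
  have hDm : max s t ≤ discScale n d s t := max_le_discScale
  have hDsq : d * s * t * √(max s t / n) ≤ discScale n d s t ^ 2 := by
    rw [← sqrt_le_left (hm.le.trans hDm)]
    exact le_add_of_nonneg_left hm.le
  set θ := chernoffParam n d s t with hθ
  set D := discScale n d s t
  set m := max s t
  have hD : 0 < D := hm.trans_le hDm
  have hx : 0 < m / n := div_pos hm hn
  set r := √(m / n)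
  have : 0 < r := sqrt_pos.2 hx
  have hr₂ : m / n = r * r := (mul_self_sqrt hx.le).symm
  set L := 1 - log (m / n) with hL
  have hentropy : subsetEntropy n m = m * L := by
    rw [subsetEntropy, hL, ← inv_div, log_inv, ← sub_eq_add_neg]
  have hL₀ : 0 ≤ L := sub_nonneg.2 ((log_nonpos hx.le ((div_le_one hn).2 hmn)).trans zero_le_one)
  have hθD : θ * D = m * L / 8 := by rw [hθ, chernoffParam_mul_discScale hm, hentropy]
  have hθL : 2 * θ ≤ L / 4 := by
    have : θ * D ≤ L / 8 * D := by rw [hθD]; nlinarith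
    linarith [le_of_mul_le_mul_right this hD]
  have hvar : d / n * s * t * θ ^ 2 ≤ m * L ^ 2 * r / 64 := by
    refine le_of_mul_le_mul_right ?_ (pow_pos hD 2)
    calc d / n * s * t * θ ^ 2 * D ^ 2 = d / n * s * t * (θ * D) ^ 2 := by ring
      _ = d * s * t * (m / n) * (m * L ^ 2) / 64 := by rw [hθD]; ring
      _ = d * s * t * r * (m * L ^ 2 * r / 64) := by rw [hr₂]; ring
      _ ≤ D ^ 2 * (m * L ^ 2 * r / 64) := by gcongr
      _ = m * L ^ 2 * r / 64 * D ^ 2 := mul_comm _ _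
  calc 2 * (d / n * s * t) * (θ ^ 2 * exp (2 * θ))
      = 2 * (d / n * s * t * θ ^ 2) * exp (2 * θ) := by ring
    _ ≤ 2 * (m * L ^ 2 * r / 64) * exp (L / 4) := by gcongr
    _ = m * L / 32 * (r * L * exp (L / 4)) := by ring
    _ ≤ m * L / 32 * 8 := by gcongr; exact sqrt_mul_one_sub_log_mul_exp_le hx
    _ = subsetEntropy n m / 4 := by rw [hentropy]; ring

end Scale

variable {n : ℕ} {P : Matrix (Fin n) (Fin n) ℝ}

lemma card_filter_card_le_le_exp {m : ℕ} (hm : 0 < m) (hmn : m ≤ n) :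
    (#{S : Finset (Fin n) | #S ≤ m} : ℝ) ≤ exp (subsetEntropy n m) := by
  have : (0 : ℝ) < m := by exact_mod_cast hm
  have hn' : (0 : ℝ) < n := by exact_mod_cast hm.trans_le hmn
  have hq : (0 : ℝ) < m / n := by positivity
  have hq₁ : (m : ℝ) / n ≤ 1 := (div_le_one hn').2 (by exact_mod_cast hmn)
  have weighted : (#{S : Finset (Fin n) | #S ≤ m} : ℝ) * (m / n : ℝ) ^ m ≤ exp m :=
    calc (#{S : Finset (Fin n) | #S ≤ m} : ℝ) * (m / n : ℝ) ^ m
        ≤ ∑ S : Finset (Fin n) with #S ≤ m, (m / n : ℝ) ^ #S := by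
          rw [← nsmul_eq_mul, ← sum_const]
          exact sum_le_sum fun S hS => pow_le_pow_of_le_one hq.le hq₁ (mem_filter.1 hS).2
      _ ≤ ∑ S : Finset (Fin n), (m / n : ℝ) ^ #S :=
          sum_le_sum_of_subset_of_nonneg (filter_subset _ _) fun _ _ _ => by positivity
      _ = (m / n + 1 : ℝ) ^ n := by
          simpa using Fintype.sum_pow_mul_eq_add_pow (Fin n) (m / n : ℝ) 1
      _ ≤ exp (m / n) ^ n := by gcongr; exact add_one_le_exp _
      _ = exp m := by rw [← exp_nat_mul, mul_div_cancel₀ _ hn'.ne']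
  have hpow : (m / n : ℝ) ^ m = exp (-(m * log (n / m))) := by
    rw [← mul_neg, ← log_inv, inv_div, exp_nat_mul, exp_log hq]
  rw [hpow, exp_neg, ← div_eq_mul_inv, div_le_iff₀ (exp_pos _)] at weighted
  rwa [subsetEntropy, mul_add, mul_one, exp_add]

lemma prob_discScale_lt_abs_sum_sum_noise_le (hsymm : ∀ u v, P u v = P v u)
    (hP : ∀ u v, 0 ≤ P u v ∧ P u v ≤ 1) {d : ℝ} (hd : 0 ≤ d) (hPd : ∀ u v, P u v ≤ d / n) (κ : ℝ)
    {S T : Finset (Fin n)} (hST : 0 < max #S #T) :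
    prob P {A | (8 * κ + 2) * discScale n d #S #T < |∑ u ∈ S, ∑ v ∈ T, noise P A u v|} ≤
      2 * exp (-(κ * subsetEntropy n (max #S #T : ℕ))) := by
  have hm : (0 : ℝ) < max (#S : ℝ) #T := by exact_mod_cast hST
  have hmn : max (#S : ℝ) #T ≤ n := by
    exact_mod_cast max_le (card_finset_fin_le S) (card_finset_fin_le T)
  set θ := chernoffParam n d #S #T with hθ
  have hθ₀ : 0 ≤ θ := chernoffParam_nonneg hm hmn
  have hmgf {ϑ : ℝ} (hϑ : |ϑ| = θ) :
      expect P (fun A => exp (ϑ * ∑ u ∈ S, ∑ v ∈ T, noise P A u v)) ≤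
        exp (subsetEntropy n (max (#S : ℝ) #T) / 4) := by
    refine (expect_exp_mul_sum_sum_noise_le hsymm hP (by positivity) hPd S T ϑ).trans ?_
    rw [← sq_abs, hϑ]
    exact exp_le_exp.2 (chernoffParam_variance_le hm hmn)
  have hexponent : θ * ((8 * κ + 2) * discScale n d #S #T) =
      (8 * κ + 2) * (subsetEntropy n (max (#S : ℝ) #T) / 8) := by
    rw [mul_left_comm, hθ, chernoffParam_mul_discScale hm]
  calc _ ≤ exp (-(θ * ((8 * κ + 2) * discScale n d #S #T))) *
        (exp (subsetEntropy n (max (#S : ℝ) #T) / 4) +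
          exp (subsetEntropy n (max (#S : ℝ) #T) / 4)) := by
        refine (prob_lt_abs_le hP _ hθ₀ _).trans ?_
        gcongr
        exacts [hmgf (abs_of_nonneg hθ₀), hmgf (by rw [abs_neg, abs_of_nonneg hθ₀])]
    _ = 2 * exp (-(κ * subsetEntropy n (max #S #T : ℕ))) := by
        rw [hexponent, ← two_mul, mul_left_comm, ← exp_add, Nat.cast_max]
        ring_nf

lemma card_filter_max_card_eq_le {m : ℕ} (hm : 0 < m) (hmn : m ≤ n) :
    (#{p : Finset (Fin n) × Finset (Fin n) | max #p.1 #p.2 = m} : ℝ) ≤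
      exp (2 * subsetEntropy n m) := by
  have hsub : ({p : Finset (Fin n) × Finset (Fin n) | max #p.1 #p.2 = m} : Finset _) ⊆
      ({S : Finset (Fin n) | #S ≤ m} : Finset _) ×ˢ ({S : Finset (Fin n) | #S ≤ m} : Finset _) :=
    fun p hp => by
      obtain ⟨h₁, h₂⟩ := max_le_iff.1 (mem_filter.1 hp).2.le
      exact mem_product.2 ⟨mem_filter.2 ⟨mem_univ _, h₁⟩, mem_filter.2 ⟨mem_univ _, h₂⟩⟩
  calc (#{p : Finset (Fin n) × Finset (Fin n) | max #p.1 #p.2 = m} : ℝ)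
      ≤ (#{S : Finset (Fin n) | #S ≤ m} : ℝ) * #{S : Finset (Fin n) | #S ≤ m} := by
        exact_mod_cast (card_le_card hsub).trans_eq (card_product _ _)
    _ ≤ exp (subsetEntropy n m) * exp (subsetEntropy n m) := by
        gcongr <;> exact card_filter_card_le_le_exp hm hmn
    _ = exp (2 * subsetEntropy n m) := by rw [two_mul, exp_add]

lemma sum_exp_neg_mul_subsetEntropy_le {κ : ℝ} (hκ : 2 ≤ κ) :
    ∑ p : Finset (Fin n) × Finset (Fin n) with 0 < max #p.1 #p.2,
      exp (-(κ * subsetEntropy n (max #p.1 #p.2 : ℕ))) ≤ n * (n : ℝ) ^ (-(κ - 2)) := by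
  have fiber {m : ℕ} (hm : m ∈ Icc 1 n) :
      ∑ p : Finset (Fin n) × Finset (Fin n) with 0 < max #p.1 #p.2 ∧ max #p.1 #p.2 = m,
        exp (-(κ * subsetEntropy n (max #p.1 #p.2 : ℕ))) ≤ (n : ℝ) ^ (-(κ - 2)) := by
    obtain ⟨hm₁, hmn⟩ := mem_Icc.1 hm
    have hn : (0 : ℝ) < n := by exact_mod_cast hm₁.trans hmn
    calc _ ≤ ∑ p : Finset (Fin n) × Finset (Fin n) with max #p.1 #p.2 = m,
          exp (-(κ * subsetEntropy n (max #p.1 #p.2 : ℕ))) :=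
          sum_le_sum_of_subset_of_nonneg (monotone_filter_right _ fun _ _ h => h.2)
            fun _ _ _ => (exp_pos _).le
      _ = #{p : Finset (Fin n) × Finset (Fin n) | max #p.1 #p.2 = m} *
            exp (-(κ * subsetEntropy n m)) := by
          rw [← nsmul_eq_mul, ← sum_const]
          exact sum_congr rfl fun p hp => by rw [(mem_filter.1 hp).2]
      _ ≤ exp (2 * subsetEntropy n m) * exp (-(κ * subsetEntropy n m)) := by
          gcongr
          exact card_filter_max_card_eq_le hm₁ hmn
      _ = exp (-((κ - 2) * subsetEntropy n m)) := by rw [← exp_add]; ring_nf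
      _ ≤ exp (-((κ - 2) * log n)) := by
          gcongr
          exact log_le_subsetEntropy (by exact_mod_cast hm₁) (by exact_mod_cast hmn)
      _ = (n : ℝ) ^ (-(κ - 2)) := by rw [rpow_def_of_pos hn]; ring_nf
  have range : ∀ p ∈ ({p | 0 < max #p.1 #p.2} : Finset (Finset (Fin n) × Finset (Fin n))),
      max #p.1 #p.2 ∈ Icc 1 n := fun p hp =>
    mem_Icc.2 ⟨(mem_filter.1 hp).2, max_le (card_finset_fin_le _) (card_finset_fin_le _)⟩
  rw [← sum_fiberwise_of_maps_to range]
  simp only [filter_filter]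
  calc _ ≤ ∑ _m ∈ Icc 1 n, (n : ℝ) ^ (-(κ - 2)) := sum_le_sum fun m hm => fiber hm
    _ = n * (n : ℝ) ^ (-(κ - 2)) := by simp

lemma one_sub_two_mul_le_prob_hasDiscrepancy_noise (hsymm : ∀ u v, P u v = P v u)
    (hP : ∀ u v, 0 ≤ P u v ∧ P u v ≤ 1) {d : ℝ} (hd : 0 ≤ d) (hPd : ∀ u v, P u v ≤ d / n) {κ : ℝ}
    (hκ : 2 ≤ κ) :
    1 - 2 * (n * (n : ℝ) ^ (-(κ - 2))) ≤
      prob P {A | IsGraph A ∧ HasDiscrepancy (noise P A) d (8 * κ + 2)} := by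
  let pairs : Finset (Finset (Fin n) × Finset (Fin n)) := {p | 0 < max #p.1 #p.2}
  let bad (p : Finset (Fin n) × Finset (Fin n)) : Set (Adj n) :=
    {A | (8 * κ + 2) * discScale n d #p.1 #p.2 < |∑ u ∈ p.1, ∑ v ∈ p.2, noise P A u v|}
  refine le_trans ?_ (one_sub_sum_prob_le_prob hP pairs bad fun A hA hgood => ⟨hA, fun S T => ?_⟩)
  · rw [sub_le_sub_iff_left]
    calc ∑ p ∈ pairs, prob P (bad p)
        ≤ ∑ p ∈ pairs, 2 * exp (-(κ * subsetEntropy n (max #p.1 #p.2 : ℕ))) :=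
          sum_le_sum fun p hp =>
            prob_discScale_lt_abs_sum_sum_noise_le hsymm hP hd hPd _ (mem_filter.1 hp).2
      _ ≤ 2 * (n * (n : ℝ) ^ (-(κ - 2))) := by
          rw [← mul_sum]
          gcongr
          exact sum_exp_neg_mul_subsetEntropy_le hκ
  · rw [Fintype.card_fin]
    rcases Nat.eq_zero_or_pos (max #S #T) with h | h
    · obtain ⟨rfl, rfl⟩ : S = ∅ ∧ T = ∅ := by simpa using h
      simp [discScale]
    · exact not_lt.1 (hgood (S, T) (mem_filter.2 ⟨mem_univ _, h⟩))

lemma one_sub_le_prob_hasDiscrepancy_noise (hsymm : ∀ u v, P u v = P v u)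
    (hP : ∀ u v, 0 ≤ P u v ∧ P u v ≤ 1) {d : ℝ} (hd : 0 ≤ d) (hPd : ∀ u v, P u v ≤ d / n) {c : ℝ}
    (hc : 0 < c) :
    1 - (n : ℝ) ^ (-c) ≤
      prob P {A | IsGraph A ∧ HasDiscrepancy (noise P A) d (8 * (c + 4) + 2)} := by
  have union := one_sub_two_mul_le_prob_hasDiscrepancy_noise hsymm hP hd hPd
    (show 2 ≤ c + 4 by linarith)
  rcases n with _ | _ | n
  · refine le_trans ?_ union
    simp [zero_rpow (neg_ne_zero.2 hc.ne')]
  · simpa using prob_nonneg hP _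
  · refine le_trans (sub_le_sub_left ?_ 1) union
    have hn : (0 : ℝ) < (n + 1 + 1 : ℕ) := by positivity
    have hsplit : ((n + 1 + 1 : ℕ) : ℝ) ^ (-c) =
        (n + 1 + 1 : ℕ) * (n + 1 + 1 : ℕ) * ((n + 1 + 1 : ℕ) : ℝ) ^ (-(c + 4 - 2)) := by
      rw [← pow_two, ← rpow_natCast _ 2, ← rpow_add hn]
      push_cast
      ring_nf
    rw [hsplit, ← mul_assoc]
    gcongr
    push_cast
    linarith

lemma adjMat_sub_eq_noise_add_diagonal {A : Adj n} (hA : IsGraph A) :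
    adjMat A - P = noise P A + diagonal fun u => -P u u := by
  ext u v
  rcases eq_or_ne u v with rfl | h
  · simp [adjMat, noise, aVal, hA.1]
  · simp [adjMat, noise, h]

lemma HasDiscrepancy.add_diagonal {ι : Type*} [Fintype ι] [DecidableEq ι] {M : Matrix ι ι ℝ}
    {d K : ℝ} (hM : HasDiscrepancy M d K) {f : ι → ℝ} (hf : ∀ u, |f u| ≤ 1) :
    HasDiscrepancy (M + diagonal f) d (K + 1) := by
  intro S T
  have hdiag : |∑ u ∈ S, ∑ v ∈ T, diagonal f u v| ≤ discScale (Fintype.card ι) d #S #T :=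
    calc |∑ u ∈ S, ∑ v ∈ T, diagonal f u v| ≤ ∑ u ∈ S, |if u ∈ T then f u else 0| := by
          simp only [diagonal_apply, sum_ite_eq]
          exact abs_sum_le_sum_abs _ _
      _ ≤ ∑ _u ∈ S, (1 : ℝ) := by
          refine sum_le_sum fun u _ => ?_
          split_ifs
          exacts [hf u, by simp]
      _ = #S := by simp
      _ ≤ discScale (Fintype.card ι) d #S #T := (le_max_left _ _).trans max_le_discScale
  simp only [Matrix.add_apply, sum_add_distrib]
  refine (abs_add_le _ _).trans ?_
  rw [add_mul, one_mul]
  exact add_le_add (hM S T) hdiag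

end Discrepancy

section DyadicSums

open Finset Real

lemma sum_pow_natAbs_le {r : ℝ} (hr : 0 ≤ r) (hr₁ : r < 1) (I : Finset ℤ) :
    ∑ i ∈ I, r ^ i.natAbs ≤ (1 + r) / (1 - r) := by
  have hgeom := hasSum_geometric_of_lt_one hr hr₁
  have hsum : HasSum (fun i : ℤ => r ^ i.natAbs) ((1 - r)⁻¹ + (1 - r)⁻¹ - r ^ (0 : ℤ).natAbs) :=
    HasSum.of_nat_of_neg (by simpa using hgeom) (by simpa using hgeom)
  refine (sum_le_hasSum I (fun i _ => by positivity) hsum).trans_eq ?_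
  have : 1 - r ≠ 0 := (sub_pos.2 hr₁).ne'
  simp only [Int.natAbs_zero, pow_zero]
  field_simp
  ring

lemma zpow_mul_cube_le {q : ℝ} (hq : 0 ≤ q) (hq₁ : q ≤ 1) {i : ℤ} (hi : (2 : ℝ) ^ i * q ^ 2 ≤ 1) :
    (2 : ℝ) ^ i * q ^ 3 ≤ (3 / 4) ^ i.natAbs := by
  rcases Int.eq_nat_or_neg i with ⟨k, rfl | rfl⟩
  · simp only [zpow_natCast, Int.natAbs_natCast] at hi ⊢
    have hqk : q ≤ (3 / 4) ^ k := by
      refine le_of_sq_le_sq ?_ (by positivity)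
      calc q ^ 2 ≤ (1 / 2) ^ k := by
            rw [one_div, inv_pow, ← one_div, le_div_iff₀' (by positivity)]
            exact hi
        _ ≤ (9 / 16) ^ k := pow_le_pow_left₀ (by norm_num) (by norm_num) k
        _ = ((3 / 4) ^ k) ^ 2 := by rw [← pow_mul, mul_comm, pow_mul]; norm_num
    calc (2 : ℝ) ^ k * q ^ 3 = 2 ^ k * q ^ 2 * q := by ring
      _ ≤ 1 * q := by gcongr
      _ ≤ (3 / 4) ^ k := by rwa [one_mul]
  · simp only [zpow_neg, zpow_natCast, Int.natAbs_neg, Int.natAbs_natCast]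
    calc ((2 : ℝ) ^ k)⁻¹ * q ^ 3 ≤ ((2 : ℝ) ^ k)⁻¹ * 1 := by
          gcongr
          exact pow_le_one₀ hq hq₁
      _ = (1 / 2) ^ k := by rw [mul_one, one_div, inv_pow]
      _ ≤ (3 / 4) ^ k := pow_le_pow_left₀ (by norm_num) (by norm_num) k

variable {m : ℕ} {I J : Finset ℤ}

lemma sum_two_zpow_le {i : ℤ} (hJ : ∀ j ∈ J, |i - j| ≤ m) :
    ∑ j ∈ J, (2 : ℝ) ^ j ≤ 2 ^ i * 2 ^ (m + 1) := by
  have hsub : J ⊆ (range (2 * m + 1)).image fun k : ℕ => i + m - k := fun j hj => by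
    have := abs_le.1 (hJ j hj)
    exact mem_image.2 ⟨(i + m - j).toNat, mem_range.2 (by omega), by omega⟩
  calc ∑ j ∈ J, (2 : ℝ) ^ j
      ≤ ∑ j ∈ (range (2 * m + 1)).image fun k : ℕ => i + m - k, (2 : ℝ) ^ j :=
        sum_le_sum_of_subset_of_nonneg hsub fun _ _ _ => by positivity
    _ = ∑ k ∈ range (2 * m + 1), (2 : ℝ) ^ (i + m - k : ℤ) :=
        sum_image fun a _ b _ hab => by simpa using hab
    _ = 2 ^ i * 2 ^ m * ∑ k ∈ range (2 * m + 1), (1 / 2 : ℝ) ^ k := by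
        rw [mul_sum]
        refine sum_congr rfl fun k _ => ?_
        rw [zpow_sub₀ two_ne_zero, zpow_add₀ two_ne_zero]
        simp [div_eq_mul_inv]
    _ ≤ 2 ^ i * 2 ^ m * 2 := by
        gcongr
        exact sum_geometric_two_le _
    _ = 2 ^ i * 2 ^ (m + 1) := by rw [pow_succ]; ring

lemma card_le_of_abs_sub_le {i : ℤ} (hJ : ∀ j ∈ J, |i - j| ≤ m) : (#J : ℝ) ≤ 2 * m + 1 := by
  have hsub : J ⊆ Icc (i - m) (i + m) := fun j hj => by
    have := abs_le.1 (hJ j hj)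
    exact mem_Icc.2 (by omega)
  have hcard := card_le_card hsub
  rw [Int.card_Icc] at hcard
  have : #J ≤ 2 * m + 1 := by omega
  exact_mod_cast this

variable {q : ℤ → ℝ}

lemma sum_near_mul_pow_four_le (hsum : ∑ i ∈ I, ((2 : ℝ) ^ i) ^ 2 * q i ^ 4 ≤ 1) :
    ∑ i ∈ I, ∑ j ∈ I with |i - j| ≤ m, (2 : ℝ) ^ i * 2 ^ j * q i ^ 4 ≤ 2 ^ (m + 1) := by
  calc ∑ i ∈ I, ∑ j ∈ I with |i - j| ≤ m, (2 : ℝ) ^ i * 2 ^ j * q i ^ 4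
      = ∑ i ∈ I, 2 ^ i * q i ^ 4 * ∑ j ∈ I with |i - j| ≤ m, (2 : ℝ) ^ j := by
        simp_rw [mul_sum, mul_right_comm]
    _ ≤ ∑ i ∈ I, 2 ^ i * q i ^ 4 * (2 ^ i * 2 ^ (m + 1)) := by
        gcongr with i
        exact sum_two_zpow_le fun j hj => (mem_filter.1 hj).2
    _ = (∑ i ∈ I, ((2 : ℝ) ^ i) ^ 2 * q i ^ 4) * 2 ^ (m + 1) := by
        rw [sum_mul]
        exact sum_congr rfl fun i _ => by ring
    _ ≤ 1 * 2 ^ (m + 1) := by gcongr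
    _ = 2 ^ (m + 1) := one_mul _

lemma sum_near_mul_sq_le (hsum : ∑ i ∈ I, ((2 : ℝ) ^ i) ^ 2 * q i ^ 4 ≤ 1) (i : ℤ) :
    ∑ j ∈ I with |i - j| ≤ m, (2 : ℝ) ^ j * q j ^ 2 ≤ √(2 * m + 1) := by
  refine le_sqrt_of_sq_le ?_
  calc (∑ j ∈ I with |i - j| ≤ m, (2 : ℝ) ^ j * q j ^ 2) ^ 2
      ≤ #{j ∈ I | |i - j| ≤ m} * ∑ j ∈ I with |i - j| ≤ m, ((2 : ℝ) ^ j * q j ^ 2) ^ 2 :=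
        sq_sum_le_card_mul_sum_sq
    _ ≤ (2 * m + 1) * ∑ j ∈ I, ((2 : ℝ) ^ j * q j ^ 2) ^ 2 := by
        gcongr
        · exact card_le_of_abs_sub_le fun j hj => (mem_filter.1 hj).2
        · exact filter_subset _ _
    _ = (2 * m + 1) * ∑ j ∈ I, ((2 : ℝ) ^ j) ^ 2 * q j ^ 4 := by
        congr 1
        exact sum_congr rfl fun j _ => by ring
    _ ≤ 2 * m + 1 := mul_le_of_le_one_right (by positivity) hsum

lemma sum_near_mul_cube_mul_sq_le (hq : ∀ i, 0 ≤ q i) (hq₁ : ∀ i, q i ≤ 1)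
    (hsum : ∑ i ∈ I, ((2 : ℝ) ^ i) ^ 2 * q i ^ 4 ≤ 1) :
    ∑ i ∈ I, ∑ j ∈ I with |i - j| ≤ m, (2 : ℝ) ^ i * 2 ^ j * (q i ^ 3 * q j ^ 2) ≤
      7 * √(2 * m + 1) := by
  have hcube : ∀ i ∈ I, (2 : ℝ) ^ i * q i ^ 3 ≤ (3 / 4) ^ i.natAbs := fun i hi => by
    have hterm : ((2 : ℝ) ^ i) ^ 2 * q i ^ 4 ≤ 1 :=
      (single_le_sum (f := fun i => ((2 : ℝ) ^ i) ^ 2 * q i ^ 4)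
        (fun i _ => by positivity) hi).trans hsum
    refine zpow_mul_cube_le (hq i) (hq₁ i) ((sq_le_one_iff₀ (by positivity)).1 ?_)
    linarith [show ((2 : ℝ) ^ i * q i ^ 2) ^ 2 = ((2 : ℝ) ^ i) ^ 2 * q i ^ 4 by ring]
  calc ∑ i ∈ I, ∑ j ∈ I with |i - j| ≤ m, (2 : ℝ) ^ i * 2 ^ j * (q i ^ 3 * q j ^ 2)
      = ∑ i ∈ I, 2 ^ i * q i ^ 3 * ∑ j ∈ I with |i - j| ≤ m, (2 : ℝ) ^ j * q j ^ 2 := by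
        simp_rw [mul_sum]
        exact sum_congr rfl fun i _ => sum_congr rfl fun j _ => by ring
    _ ≤ ∑ i ∈ I, (3 / 4) ^ i.natAbs * √(2 * m + 1) := by
        gcongr with i hi
        · exact hcube i hi
        · exact sum_near_mul_sq_le hsum i
    _ ≤ 7 * √(2 * m + 1) := by
        rw [← sum_mul]
        gcongr
        exact (sum_pow_natAbs_le (by norm_num) (by norm_num) I).trans_eq (by norm_num)

lemma sum_near_comm (f : ℤ → ℤ → ℝ) :
    ∑ i ∈ I, ∑ j ∈ I with |i - j| ≤ m, f j i = ∑ i ∈ I, ∑ j ∈ I with |i - j| ≤ m, f i j := by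
  simp_rw [sum_filter]
  rw [sum_comm]
  simp_rw [abs_sub_comm]

/-- Writing set sizes as `n * a ^ 4` clears the nested square roots of `discScale`. -/
lemma discScale_mul_pow_four_le {n d a b : ℝ} (hn : 0 ≤ n) (hd : 0 ≤ d) (ha : 0 ≤ a)
    (hb : 0 ≤ b) :
    discScale n d (n * a ^ 4) (n * b ^ 4) ≤
      n * (a ^ 4 + b ^ 4 + √d * (a ^ 3 * b ^ 2 + b ^ 3 * a ^ 2)) := by
  have hmax : max (n * a ^ 4) (n * b ^ 4) = n * max a b ^ 4 := by
    rw [← mul_max_of_nonneg _ _ hn, (pow_left_monotoneOn (n := 4)).map_max ha hb]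
  have hle : max (n * a ^ 4) (n * b ^ 4) ≤ n * (a ^ 4 + b ^ 4) := by
    rw [mul_add]
    exact max_le_add_of_nonneg (by positivity) (by positivity)
  have hroot : √(max (n * a ^ 4) (n * b ^ 4) / n) ≤ (a + b) ^ 2 := by
    refine (sqrt_le_left (by positivity)).2 (div_le_of_le_mul₀ hn (by positivity) ?_)
    rw [hmax, ← pow_mul, mul_comm n]
    gcongr
    exact max_le_add_of_nonneg ha hb
  have hsqrt : √(d * (n * a ^ 4) * (n * b ^ 4) * √(max (n * a ^ 4) (n * b ^ 4) / n)) ≤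
      √d * (n * a ^ 2 * b ^ 2 * (a + b)) := by
    calc _ ≤ √(d * (n * a ^ 4) * (n * b ^ 4) * (a + b) ^ 2) := by gcongr
      _ = √(d * (n * a ^ 2 * b ^ 2 * (a + b)) ^ 2) := by congr 1; ring
      _ = √d * (n * a ^ 2 * b ^ 2 * (a + b)) := by rw [sqrt_mul hd, sqrt_sq (by positivity)]
  calc _ ≤ n * (a ^ 4 + b ^ 4) + √d * (n * a ^ 2 * b ^ 2 * (a + b)) := add_le_add hle hsqrt
    _ = _ := by ring

lemma sum_near_mul_discScale_le {n d : ℝ} (hn : 0 ≤ n) (hd : 0 ≤ d) (hq : ∀ i, 0 ≤ q i)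
    (hq₁ : ∀ i, q i ≤ 1) (hsum : ∑ i ∈ I, ((2 : ℝ) ^ i) ^ 2 * q i ^ 4 ≤ 1) :
    ∑ i ∈ I, ∑ j ∈ I with |i - j| ≤ m,
        (2 : ℝ) ^ i * 2 ^ j * discScale n d (n * q i ^ 4) (n * q j ^ 4) ≤
      2 * n * (2 ^ (m + 1) + 7 * √d * √(2 * m + 1)) := by
  let f (i j : ℤ) : ℝ := 2 ^ i * 2 ^ j * q i ^ 4
  let g (i j : ℤ) : ℝ := 2 ^ i * 2 ^ j * (q i ^ 3 * q j ^ 2)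
  calc ∑ i ∈ I, ∑ j ∈ I with |i - j| ≤ m,
        (2 : ℝ) ^ i * 2 ^ j * discScale n d (n * q i ^ 4) (n * q j ^ 4)
      ≤ ∑ i ∈ I, ∑ j ∈ I with |i - j| ≤ m,
          n * (f i j + f j i + √d * (g i j + g j i)) := by
        refine sum_le_sum fun i _ => sum_le_sum fun j _ => ?_
        refine (mul_le_mul_of_nonneg_left (discScale_mul_pow_four_le hn hd (hq i) (hq j))
          (by positivity)).trans_eq ?_
        ring
    _ = 2 * n * (∑ i ∈ I, ∑ j ∈ I with |i - j| ≤ m, f i j +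
          √d * ∑ i ∈ I, ∑ j ∈ I with |i - j| ≤ m, g i j) := by
        simp_rw [← mul_sum, sum_add_distrib, ← mul_sum, sum_add_distrib,
          sum_near_comm f, sum_near_comm g]
        ring
    _ ≤ 2 * n * (2 ^ (m + 1) + √d * (7 * √(2 * m + 1))) := by
        gcongr
        · exact sum_near_mul_pow_four_le hsum
        · exact sum_near_mul_cube_mul_sq_le hq hq₁ hsum
    _ = _ := by ring

end DyadicSums

section QuadraticForm

open Finset Matrix Real

variable {ι : Type*} {M : Matrix ι ι ℝ}

section SetSums

variable {S T : Finset ι}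

lemma abs_sum_mul_le_of_subset {x f : ι → ℝ} {a B : ℝ} (ha : 0 ≤ a) (hx : ∀ u ∈ S, |x u| ≤ a)
    (hf : ∀ S' ⊆ S, |∑ u ∈ S', f u| ≤ B) : |∑ u ∈ S, x u * f u| ≤ 2 * a * B := by
  have habs : ∑ u ∈ S, |f u| = ∑ u ∈ S with 0 ≤ f u, f u - ∑ u ∈ S with ¬ 0 ≤ f u, f u := by
    rw [← sum_filter_add_sum_filter_not S (fun u => 0 ≤ f u), sub_eq_add_neg, ← sum_neg_distrib]
    congr 1
    · exact sum_congr rfl fun u hu => abs_of_nonneg (mem_filter.1 hu).2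
    · exact sum_congr rfl fun u hu => abs_of_neg (not_le.1 (mem_filter.1 hu).2)
  have hpos := (abs_le.1 (hf _ (filter_subset (fun u => 0 ≤ f u) S))).2
  have hneg := (abs_le.1 (hf _ (filter_subset (fun u => ¬ 0 ≤ f u) S))).1
  calc |∑ u ∈ S, x u * f u| ≤ ∑ u ∈ S, |x u * f u| := abs_sum_le_sum_abs _ _
    _ ≤ ∑ u ∈ S, a * |f u| := by
        simp_rw [abs_mul]
        gcongr with u hu
        exact hx u hu
    _ = a * ∑ u ∈ S, |f u| := by rw [mul_sum]
    _ ≤ a * (2 * B) := by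
        gcongr
        linarith
    _ = 2 * a * B := by ring

lemma abs_sum_sum_mul_le_of_subset {x y : ι → ℝ} {a b B : ℝ} (ha : 0 ≤ a) (hb : 0 ≤ b)
    (hx : ∀ u ∈ S, |x u| ≤ a) (hy : ∀ v ∈ T, |y v| ≤ b)
    (hM : ∀ S' ⊆ S, ∀ T' ⊆ T, |∑ u ∈ S', ∑ v ∈ T', M u v| ≤ B) :
    |∑ u ∈ S, ∑ v ∈ T, x u * M u v * y v| ≤ 4 * a * b * B := by
  simp_rw [mul_assoc, ← mul_sum]
  refine (abs_sum_mul_le_of_subset (B := 2 * b * B) ha hx fun S' hS' => ?_).trans_eq (by ring)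
  rw [sum_comm]
  simp_rw [mul_comm (M _ _), ← mul_sum]
  refine abs_sum_mul_le_of_subset hb hy fun T' hT' => ?_
  rw [sum_comm]
  exact hM S' hS' T' hT'

end SetSums

variable [Fintype ι]

/-- The quadratic form of `M` is at most `ε` times the diagonal quadratic form with weights `W`. -/
def QuadFormBounded (M : Matrix ι ι ℝ) (W : ι → ℝ) (ε : ℝ) : Prop :=
  ∀ z : ι → ℝ, |z ⬝ᵥ M *ᵥ z| ≤ ε * ∑ u, W u * z u ^ 2

lemma dotProduct_mulVec_eq_sum_sum (M : Matrix ι ι ℝ) (x y : ι → ℝ) :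
    x ⬝ᵥ M *ᵥ y = ∑ u, ∑ v, x u * M u v * y v := by
  simp only [dotProduct, mulVec, mul_sum, mul_assoc]

/-- The points at which the size of `z` lies in the dyadic interval `[2 ^ i, 2 ^ (i + 1))`. -/
noncomputable def dyadicLevel (z : ι → ℝ) (i : ℤ) : Finset ι :=
  {u | z u ≠ 0 ∧ Int.log 2 |z u| = i}

/-- The dyadic levels at which `z` has a point. -/
noncomputable def dyadicLevels (z : ι → ℝ) : Finset ℤ :=
  image (fun u => Int.log 2 |z u|) {u | z u ≠ 0}

/-- The part of the quadratic form of `M` at `z` between the points of level `i` and those of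
level `j`. -/
noncomputable def blockForm (M : Matrix ι ι ℝ) (z : ι → ℝ) (i j : ℤ) : ℝ :=
  ∑ u ∈ dyadicLevel z i, ∑ v ∈ dyadicLevel z j, z u * M u v * z v

variable {z : ι → ℝ} {i j : ℤ} {u v : ι}

lemma two_zpow_le_abs_of_mem_dyadicLevel (hu : u ∈ dyadicLevel z i) : (2 : ℝ) ^ i ≤ |z u| := by
  obtain ⟨hz, rfl⟩ := (mem_filter.1 hu).2
  exact Int.zpow_log_le_self (b := 2) one_lt_two (abs_pos.2 hz)

lemma abs_le_of_mem_dyadicLevel (hu : u ∈ dyadicLevel z i) : |z u| ≤ (2 : ℝ) ^ (i + 1) := by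
  obtain ⟨-, rfl⟩ := (mem_filter.1 hu).2
  exact (Int.lt_zpow_succ_log_self (b := 2) one_lt_two |z u|).le

lemma sum_sum_dyadicLevel (z f : ι → ℝ) :
    ∑ i ∈ dyadicLevels z, ∑ u ∈ dyadicLevel z i, f u = ∑ u with z u ≠ 0, f u := by
  rw [← sum_fiberwise_of_maps_to (t := dyadicLevels z)
    (fun u hu => mem_image_of_mem (fun u => Int.log 2 |z u|) hu) f]
  simp_rw [filter_filter, dyadicLevel]

lemma sum_sum_sum_sum_dyadicLevel (z : ι → ℝ) (f : ι → ι → ℝ) :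
    ∑ i ∈ dyadicLevels z, ∑ j ∈ dyadicLevels z,
        ∑ u ∈ dyadicLevel z i, ∑ v ∈ dyadicLevel z j, f u v =
      ∑ u with z u ≠ 0, ∑ v with z v ≠ 0, f u v := by
  rw [← sum_sum_dyadicLevel]
  refine sum_congr rfl fun i _ => ?_
  rw [sum_comm]
  exact sum_congr rfl fun u _ => sum_sum_dyadicLevel z (f u)

lemma sum_sum_blockForm (M : Matrix ι ι ℝ) (z : ι → ℝ) :
    ∑ i ∈ dyadicLevels z, ∑ j ∈ dyadicLevels z, blockForm M z i j = z ⬝ᵥ M *ᵥ z := by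
  simp_rw [dotProduct_mulVec_eq_sum_sum, blockForm, sum_sum_sum_sum_dyadicLevel, sum_filter]
  refine sum_congr rfl fun u _ => ?_
  split_ifs with hu
  · exact sum_congr rfl fun v _ => by split_ifs with hv <;> simp_all
  · simp [not_not.1 hu]

variable {m : ℕ}

lemma abs_mul_le_of_mem_dyadicLevel (hij : i + m < j) (hu : u ∈ dyadicLevel z i)
    (hv : v ∈ dyadicLevel z j) : |z u| * |z v| ≤ (2 ^ m)⁻¹ * z v ^ 2 := by
  have hle : |z u| ≤ (2 ^ m)⁻¹ * |z v| := by
    calc |z u| ≤ (2 : ℝ) ^ (i + 1) := abs_le_of_mem_dyadicLevel hu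
      _ ≤ (2 : ℝ) ^ (-(m : ℤ) + j) := zpow_le_zpow_right₀ one_le_two (by omega)
      _ = (2 ^ m)⁻¹ * 2 ^ j := by rw [zpow_add₀ two_ne_zero, _root_.zpow_neg, zpow_natCast]
      _ ≤ (2 ^ m)⁻¹ * |z v| := by
          gcongr
          exact two_zpow_le_abs_of_mem_dyadicLevel hv
  calc |z u| * |z v| ≤ (2 ^ m)⁻¹ * |z v| * |z v| := by gcongr
    _ = (2 ^ m)⁻¹ * z v ^ 2 := by rw [mul_assoc, ← sq, sq_abs]

lemma abs_mul_mul_le_of_mem_dyadicLevel (M : Matrix ι ι ℝ) (hij : ¬ |i - j| ≤ m)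
    (hu : u ∈ dyadicLevel z i) (hv : v ∈ dyadicLevel z j) :
    |z u * M u v * z v| ≤ (2 ^ m)⁻¹ * (|M u v| * (z u ^ 2 + z v ^ 2)) := by
  have hz : |z u| * |z v| ≤ (2 ^ m)⁻¹ * (z u ^ 2 + z v ^ 2) := by
    rcases lt_abs.1 (not_le.1 hij) with h | h
    · rw [mul_comm |z u|]
      refine (abs_mul_le_of_mem_dyadicLevel (by linarith) hv hu).trans ?_
      gcongr
      exact le_add_of_nonneg_right (sq_nonneg _)
    · refine (abs_mul_le_of_mem_dyadicLevel (by linarith) hu hv).trans ?_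
      gcongr
      exact le_add_of_nonneg_left (sq_nonneg _)
  calc |z u * M u v * z v| = |M u v| * (|z u| * |z v|) := by
        rw [abs_mul, abs_mul]
        ring
    _ ≤ |M u v| * ((2 ^ m)⁻¹ * (z u ^ 2 + z v ^ 2)) := by gcongr
    _ = _ := by ring

lemma sum_sum_abs_mul_add_sq_le (hM : M.IsSymm) {W : ι → ℝ} (hW : ∀ u, ∑ v, |M u v| ≤ W u) :
    ∑ u, ∑ v, |M u v| * (z u ^ 2 + z v ^ 2) ≤ 2 * ∑ u, W u * z u ^ 2 := by
  have hswap : ∑ u, ∑ v, |M u v| * z v ^ 2 = ∑ u, ∑ v, |M u v| * z u ^ 2 := by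
    rw [sum_comm]
    simp_rw [hM.apply]
  calc ∑ u, ∑ v, |M u v| * (z u ^ 2 + z v ^ 2) = 2 * ∑ u, (∑ v, |M u v|) * z u ^ 2 := by
        simp_rw [mul_add, sum_add_distrib, hswap, sum_mul, two_mul]
    _ ≤ 2 * ∑ u, W u * z u ^ 2 := by
        gcongr with u
        exact hW u

lemma sum_far_abs_blockForm_le (hM : M.IsSymm) {W : ι → ℝ} (hW : ∀ u, ∑ v, |M u v| ≤ W u) :
    ∑ i ∈ dyadicLevels z, ∑ j ∈ dyadicLevels z with ¬ |i - j| ≤ m, |blockForm M z i j| ≤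
      2 * (2 ^ m)⁻¹ * ∑ u, W u * z u ^ 2 := by
  calc ∑ i ∈ dyadicLevels z, ∑ j ∈ dyadicLevels z with ¬ |i - j| ≤ m, |blockForm M z i j|
      ≤ ∑ i ∈ dyadicLevels z, ∑ j ∈ dyadicLevels z with ¬ |i - j| ≤ m,
          ∑ u ∈ dyadicLevel z i, ∑ v ∈ dyadicLevel z j,
            (2 ^ m)⁻¹ * (|M u v| * (z u ^ 2 + z v ^ 2)) := by
        gcongr with i _ j hj
        refine (abs_sum_le_sum_abs _ _).trans (sum_le_sum fun u hu => ?_)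
        refine (abs_sum_le_sum_abs _ _).trans (sum_le_sum fun v hv => ?_)
        exact abs_mul_mul_le_of_mem_dyadicLevel M (mem_filter.1 hj).2 hu hv
    _ ≤ ∑ i ∈ dyadicLevels z, ∑ j ∈ dyadicLevels z,
          ∑ u ∈ dyadicLevel z i, ∑ v ∈ dyadicLevel z j,
            (2 ^ m)⁻¹ * (|M u v| * (z u ^ 2 + z v ^ 2)) := by
        gcongr
        exact filter_subset _ _
    _ ≤ ∑ u, ∑ v, (2 ^ m)⁻¹ * (|M u v| * (z u ^ 2 + z v ^ 2)) := by
        rw [sum_sum_sum_sum_dyadicLevel]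
        refine (sum_le_sum_of_subset_of_nonneg (filter_subset _ _)
          fun u _ _ => sum_nonneg fun v _ => by positivity).trans (sum_le_sum fun u _ => ?_)
        gcongr
        exact filter_subset _ _
    _ ≤ (2 ^ m)⁻¹ * (2 * ∑ u, W u * z u ^ 2) := by
        simp_rw [← mul_sum]
        gcongr
        exact sum_sum_abs_mul_add_sq_le hM hW
    _ = _ := by ring

variable {d K : ℝ}

lemma abs_blockForm_le (hd : 0 ≤ d) (hK : 0 ≤ K) (hdisc : HasDiscrepancy M d K) (i j : ℤ) :
    |blockForm M z i j| ≤ 16 * K * (2 ^ i * 2 ^ j *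
      discScale (Fintype.card ι) d #(dyadicLevel z i) #(dyadicLevel z j)) := by
  refine (abs_sum_sum_mul_le_of_subset (by positivity) (by positivity)
    (fun u hu => abs_le_of_mem_dyadicLevel hu) (fun v hv => abs_le_of_mem_dyadicLevel hv)
    fun S hS T hT => (hdisc S T).trans (mul_le_mul_of_nonneg_left
      (discScale_mono (Nat.cast_nonneg _) hd (Nat.cast_nonneg _) (Nat.cast_nonneg _)
        (Nat.cast_le.2 (card_le_card hS)) (Nat.cast_le.2 (card_le_card hT))) hK)).trans_eq ?_
  rw [zpow_add_one₀ two_ne_zero, zpow_add_one₀ two_ne_zero]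
  ring

lemma sum_sq_two_zpow_mul_card_dyadicLevel_le (z : ι → ℝ) :
    ∑ i ∈ dyadicLevels z, ((2 : ℝ) ^ i) ^ 2 * #(dyadicLevel z i) ≤ ∑ u, z u ^ 2 := by
  calc ∑ i ∈ dyadicLevels z, ((2 : ℝ) ^ i) ^ 2 * #(dyadicLevel z i)
      ≤ ∑ i ∈ dyadicLevels z, ∑ u ∈ dyadicLevel z i, z u ^ 2 := by
        gcongr with i
        rw [mul_comm, ← nsmul_eq_mul, ← sum_const]
        refine sum_le_sum fun u hu => ?_
        rw [← sq_abs (z u)]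
        gcongr
        exact two_zpow_le_abs_of_mem_dyadicLevel hu
    _ ≤ ∑ u, z u ^ 2 := by
        rw [sum_sum_dyadicLevel]
        gcongr
        exact filter_subset _ _

lemma exists_eq_mul_pow_four {n s : ℝ} (hn : 0 < n) (hs : 0 ≤ s) (hsn : s ≤ n) :
    ∃ q : ℝ, 0 ≤ q ∧ q ≤ 1 ∧ s = n * q ^ 4 := by
  have hq : √√(s / n) ^ 4 = s / n := by
    rw [show 4 = 2 * 2 from rfl, pow_mul, sq_sqrt (sqrt_nonneg _), sq_sqrt (by positivity)]
  refine ⟨√√(s / n), sqrt_nonneg _, ?_, by rw [hq]; field_simp⟩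
  simpa using (div_le_one hn).2 hsn

lemma sum_near_abs_blockForm_le [Nonempty ι] (hd : 0 ≤ d) (hK : 0 ≤ K)
    (hdisc : HasDiscrepancy M d K) (hz : ∑ u, z u ^ 2 = Fintype.card ι) :
    ∑ i ∈ dyadicLevels z, ∑ j ∈ dyadicLevels z with |i - j| ≤ m, |blockForm M z i j| ≤
      32 * K * Fintype.card ι * (2 ^ (m + 1) + 7 * √d * √(2 * m + 1)) := by
  have hn : (0 : ℝ) < Fintype.card ι := Nat.cast_pos.2 Fintype.card_pos
  choose q hq hq₁ hcard using fun i => exists_eq_mul_pow_four hn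
    (Nat.cast_nonneg #(dyadicLevel z i)) (Nat.cast_le.2 (card_le_univ (dyadicLevel z i)))
  have hsum : ∑ i ∈ dyadicLevels z, ((2 : ℝ) ^ i) ^ 2 * q i ^ 4 ≤ 1 := by
    refine le_of_mul_le_mul_left ?_ hn
    calc (Fintype.card ι : ℝ) * ∑ i ∈ dyadicLevels z, ((2 : ℝ) ^ i) ^ 2 * q i ^ 4
        = ∑ i ∈ dyadicLevels z, ((2 : ℝ) ^ i) ^ 2 * #(dyadicLevel z i) := by
          simp_rw [hcard, mul_sum, mul_left_comm]
      _ ≤ Fintype.card ι * 1 := by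
          rw [mul_one, ← hz]
          exact sum_sq_two_zpow_mul_card_dyadicLevel_le z
  calc ∑ i ∈ dyadicLevels z, ∑ j ∈ dyadicLevels z with |i - j| ≤ m, |blockForm M z i j|
      ≤ ∑ i ∈ dyadicLevels z, ∑ j ∈ dyadicLevels z with |i - j| ≤ m,
          16 * K * (2 ^ i * 2 ^ j * discScale (Fintype.card ι) d
            (Fintype.card ι * q i ^ 4) (Fintype.card ι * q j ^ 4)) := by
        gcongr with i _ j _
        rw [← hcard, ← hcard]
        exact abs_blockForm_le hd hK hdisc i j
    _ ≤ 16 * K * (2 * Fintype.card ι * (2 ^ (m + 1) + 7 * √d * √(2 * m + 1))) := by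
        simp_rw [← mul_sum]
        gcongr
        exact sum_near_mul_discScale_le hn.le hd hq hq₁ hsum
    _ = _ := by ring

lemma abs_dotProduct_mulVec_le_near_add_far [Nonempty ι] (hM : M.IsSymm) (hd : 0 ≤ d) (hK : 0 ≤ K)
    (hdisc : HasDiscrepancy M d K) {W : ι → ℝ} (hW : ∀ u, ∑ v, |M u v| ≤ W u)
    (hz : ∑ u, z u ^ 2 = Fintype.card ι) (m : ℕ) :
    |z ⬝ᵥ M *ᵥ z| ≤ 32 * K * Fintype.card ι * (2 ^ (m + 1) + 7 * √d * √(2 * m + 1)) +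
      2 * (2 ^ m)⁻¹ * ∑ u, W u * z u ^ 2 := by
  calc |z ⬝ᵥ M *ᵥ z|
      ≤ ∑ i ∈ dyadicLevels z, ∑ j ∈ dyadicLevels z, |blockForm M z i j| := by
        rw [← sum_sum_blockForm]
        exact (abs_sum_le_sum_abs _ _).trans (sum_le_sum fun i _ => abs_sum_le_sum_abs _ _)
    _ = ∑ i ∈ dyadicLevels z, ∑ j ∈ dyadicLevels z with |i - j| ≤ m, |blockForm M z i j| +
          ∑ i ∈ dyadicLevels z, ∑ j ∈ dyadicLevels z with ¬ |i - j| ≤ m, |blockForm M z i j| := by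
        simp_rw [← sum_add_distrib, sum_filter_add_sum_filter_not]
    _ ≤ _ := add_le_add (sum_near_abs_blockForm_le hd hK hdisc hz) (sum_far_abs_blockForm_le hM hW)

/-- The rate `√(log (e d) / d)` of the deviation of the Laplacian. -/
noncomputable def lapRate (d : ℝ) : ℝ := √(log (exp 1 * d) / d)

/-- The constant with which discrepancy at most `K` bounds quadratic forms. -/
def quadConst (K : ℝ) : ℝ := 2 + 576 * K

lemma quadConst_pos (hK : 0 ≤ K) : 0 < quadConst K := by
  unfold quadConst
  positivity

lemma one_le_log_exp_mul (hd : 1 ≤ d) : 1 ≤ log (exp 1 * d) := by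
  rw [log_mul (exp_pos 1).ne' (by positivity), log_exp]
  exact le_add_of_nonneg_right (log_nonneg hd)

lemma lapRate_pos (hd : 1 ≤ d) : 0 < lapRate d :=
  sqrt_pos.2 (div_pos (one_pos.trans_le (one_le_log_exp_mul hd)) (one_pos.trans_le hd))

lemma exists_dyadic_scale (hd : 1 ≤ d) :
    ∃ m : ℕ, √d ≤ 2 ^ m ∧ (2 : ℝ) ^ m ≤ 2 * √d ∧ √(2 * m + 1) ≤ 2 * √(log (exp 1 * d)) := by
  obtain ⟨k, hk, hk'⟩ := exists_nat_pow_near (one_le_sqrt.2 hd) (one_lt_two (α := ℝ))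
  have hlog : k * log 2 ≤ log d / 2 := by
    rw [← log_sqrt (by positivity), ← log_pow]
    exact log_le_log (by positivity) hk
  have hk_le : (k : ℝ) / 2 ≤ k * log 2 := by
    rw [div_eq_mul_inv]
    gcongr
    linarith [log_two_gt_d9]
  refine ⟨k + 1, hk'.le, by rw [pow_succ]; linarith, ?_⟩
  calc √(2 * (k + 1 : ℕ) + 1) ≤ √(2 ^ 2 * log (exp 1 * d)) := by
        gcongr
        rw [log_mul (exp_pos 1).ne' (by positivity), log_exp]
        push_cast
        linarith [log_nonneg hd]
    _ = 2 * √(log (exp 1 * d)) := by rw [sqrt_mul (by norm_num), sqrt_sq zero_le_two]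

lemma abs_dotProduct_mulVec_le_of_sum_sq_eq [Nonempty ι] (hM : M.IsSymm) (hd : 1 ≤ d) (hK : 0 ≤ K)
    (hdisc : HasDiscrepancy M d K) {W : ι → ℝ} (hW : ∀ u, ∑ v, |M u v| ≤ W u)
    (hdW : ∀ u, d ≤ W u) (hz : ∑ u, z u ^ 2 = Fintype.card ι) :
    |z ⬝ᵥ M *ᵥ z| ≤ quadConst K * lapRate d * ∑ u, W u * z u ^ 2 := by
  obtain ⟨m, hm, hm', hmlog⟩ := exists_dyadic_scale hd
  set L := √(log (exp 1 * d))
  set Q := ∑ u, W u * z u ^ 2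
  have hL : 1 ≤ L := one_le_sqrt.2 (one_le_log_exp_mul hd)
  have hsqrt : 0 < √d := sqrt_pos.2 (by positivity)
  have hdQ : Fintype.card ι * √d ≤ Q / √d := by
    rw [le_div_iff₀ hsqrt, mul_assoc, mul_self_sqrt (by positivity), mul_comm, ← hz, mul_sum]
    exact sum_le_sum fun u _ => mul_le_mul_of_nonneg_right (hdW u) (sq_nonneg _)
  have hQ₀ : 0 ≤ Q / √d := le_trans (by positivity) hdQ
  have hnear : 32 * K * Fintype.card ι * (2 ^ (m + 1) + 7 * √d * √(2 * m + 1)) ≤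
      576 * K * (L * (Q / √d)) := by
    calc 32 * K * Fintype.card ι * (2 ^ (m + 1) + 7 * √d * √(2 * m + 1))
        ≤ 32 * K * Fintype.card ι * (4 * √d * L + 7 * √d * (2 * L)) := by
          gcongr
          rw [pow_succ]
          nlinarith
      _ = 576 * K * (L * (Fintype.card ι * √d)) := by ring
      _ ≤ 576 * K * (L * (Q / √d)) := by gcongr
  have hfar : 2 * (2 ^ m)⁻¹ * Q ≤ 2 * (L * (Q / √d)) := by
    have hQ' : 0 ≤ Q := by simpa [hsqrt.ne'] using mul_nonneg hQ₀ hsqrt.le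
    calc 2 * (2 ^ m)⁻¹ * Q ≤ 2 * (√d)⁻¹ * Q := by gcongr
      _ = 2 * (1 * (Q / √d)) := by rw [div_eq_mul_inv]; ring
      _ ≤ 2 * (L * (Q / √d)) := by gcongr
  calc |z ⬝ᵥ M *ᵥ z|
      ≤ 32 * K * Fintype.card ι * (2 ^ (m + 1) + 7 * √d * √(2 * m + 1)) + 2 * (2 ^ m)⁻¹ * Q :=
        abs_dotProduct_mulVec_le_near_add_far hM (by positivity) hK hdisc hW hz m
    _ ≤ 576 * K * (L * (Q / √d)) + 2 * (L * (Q / √d)) := add_le_add hnear hfar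
    _ = quadConst K * lapRate d * Q := by
        rw [quadConst, lapRate, sqrt_div' _ (by positivity)]
        ring

lemma quadFormBounded_of_sum_sq_eq {W : ι → ℝ} {ε r : ℝ} (hr : 0 < r)
    (h : ∀ z : ι → ℝ, ∑ u, z u ^ 2 = r → |z ⬝ᵥ M *ᵥ z| ≤ ε * ∑ u, W u * z u ^ 2) :
    QuadFormBounded M W ε := by
  intro z
  rcases (sum_nonneg fun u _ => sq_nonneg (z u) : 0 ≤ ∑ u, z u ^ 2).eq_or_lt with h₀ | hpos
  · have hz : z = 0 := funext fun u => by
      simpa using (sum_eq_zero_iff_of_nonneg fun u _ => sq_nonneg (z u)).1 h₀.symm u (mem_univ u)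
    simp [hz]
  · set a := √(r / ∑ u, z u ^ 2)
    have ha : a ^ 2 = r / ∑ u, z u ^ 2 := sq_sqrt (by positivity)
    have ha₀ : 0 < a ^ 2 := ha ▸ by positivity
    have hscaled := h (a • z) (by
      simp_rw [Pi.smul_apply, smul_eq_mul, mul_pow, ← mul_sum, ha]
      field_simp)
    refine le_of_mul_le_mul_left ?_ ha₀
    calc a ^ 2 * |z ⬝ᵥ M *ᵥ z| = |(a • z) ⬝ᵥ M *ᵥ (a • z)| := by
          rw [mulVec_smul, smul_dotProduct, dotProduct_smul, smul_smul, ← sq, smul_eq_mul, abs_mul,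
            abs_of_pos ha₀]
      _ ≤ ε * ∑ u, W u * (a • z) u ^ 2 := hscaled
      _ = a ^ 2 * (ε * ∑ u, W u * z u ^ 2) := by
          simp_rw [mul_sum]
          exact sum_congr rfl fun u _ => by simp only [Pi.smul_apply, smul_eq_mul]; ring

theorem HasDiscrepancy.quadFormBounded (hdisc : HasDiscrepancy M d K) (hM : M.IsSymm) (hd : 1 ≤ d)
    (hK : 0 ≤ K) {W : ι → ℝ} (hW : ∀ u, ∑ v, |M u v| ≤ W u) (hdW : ∀ u, d ≤ W u) :
    QuadFormBounded M W (quadConst K * lapRate d) := by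
  rcases isEmpty_or_nonempty ι
  · intro z
    simp
  · exact quadFormBounded_of_sum_sq_eq (Nat.cast_pos.2 Fintype.card_pos) fun z hz =>
      abs_dotProduct_mulVec_le_of_sum_sq_eq hM hd hK hdisc hW hdW hz

end QuadraticForm

section Laplacian

open Finset Matrix Real

section Stability

variable {ι : Type*} [Fintype ι] {M R : Matrix ι ι ℝ} {W : ι → ℝ} {ε : ℝ}

lemma dotProduct_mulVec_comm (hM : M.IsSymm) (x y : ι → ℝ) : x ⬝ᵥ M *ᵥ y = y ⬝ᵥ M *ᵥ x := by
  rw [dotProduct_mulVec, ← mulVec_transpose, hM.eq, dotProduct_comm]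

lemma QuadFormBounded.abs_dotProduct_mulVec_le (hq : QuadFormBounded M W ε) (hM : M.IsSymm)
    (x y : ι → ℝ) :
    |x ⬝ᵥ M *ᵥ y| ≤ ε / 2 * (∑ u, W u * x u ^ 2 + ∑ u, W u * y u ^ 2) := by
  have hpolar : 4 * (x ⬝ᵥ M *ᵥ y) =
      (x + y) ⬝ᵥ M *ᵥ (x + y) - (x - y) ⬝ᵥ M *ᵥ (x - y) := by
    simp only [mulVec_add, mulVec_sub, dotProduct_add, dotProduct_sub, add_dotProduct,
      sub_dotProduct, dotProduct_mulVec_comm hM y x]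
    ring
  have hparallelogram : ∑ u, W u * (x + y) u ^ 2 + ∑ u, W u * (x - y) u ^ 2 =
      2 * (∑ u, W u * x u ^ 2 + ∑ u, W u * y u ^ 2) := by
    simp_rw [← sum_add_distrib, mul_sum]
    exact sum_congr rfl fun u _ => by simp only [Pi.add_apply, Pi.sub_apply]; ring
  have hbound := (abs_sub _ _).trans (add_le_add (hq (x + y)) (hq (x - y)))
  rw [← hpolar, ← mul_add, hparallelogram, abs_mul, abs_of_pos four_pos] at hbound
  linarith

/-- The row sums are detected by testing the form of `M` against the constant vector. -/
lemma QuadFormBounded.sum_rowSum_sq_div_le (hq : QuadFormBounded M W ε) (hM : M.IsSymm)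
    (hε : 0 < ε) {D : ι → ℝ} (hD : ∀ u, 0 < D u) (hWD : ∀ u, W u ≤ D u) :
    ∑ u, (∑ v, M u v) ^ 2 / D u ≤ ε ^ 2 * ∑ u, W u := by
  set S := ∑ u, (∑ v, M u v) ^ 2 / D u
  let x (u : ι) : ℝ := ε⁻¹ * ((∑ v, M u v) / D u)
  have hform : x ⬝ᵥ M *ᵥ (fun _ => 1) = ε⁻¹ * S := by
    simp only [x, S, dotProduct, mulVec, mul_one, mul_sum]
    refine sum_congr rfl fun u _ => (mul_sum _ _ _).symm.trans ?_
    ring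
  have hx : ∑ u, W u * x u ^ 2 ≤ ε⁻¹ ^ 2 * S := by
    rw [mul_sum]
    refine sum_le_sum fun u _ => ?_
    have hDu := hD u
    calc W u * x u ^ 2 ≤ D u * x u ^ 2 := by gcongr; exact hWD u
      _ = ε⁻¹ ^ 2 * ((∑ v, M u v) ^ 2 / D u) := by simp only [x]; field_simp
  have hbound : ε⁻¹ * S ≤ ε / 2 * (ε⁻¹ ^ 2 * S + ∑ u, W u) := by
    calc ε⁻¹ * S ≤ ε / 2 * (∑ u, W u * x u ^ 2 + ∑ u, W u * 1 ^ 2) :=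
          hform ▸ (le_abs_self _).trans (hq.abs_dotProduct_mulVec_le hM x fun _ => 1)
      _ ≤ ε / 2 * (ε⁻¹ ^ 2 * S + ∑ u, W u) := by
          simp only [one_pow, mul_one]
          gcongr
  have hscaled := mul_le_mul_of_nonneg_left hbound (by positivity : 0 ≤ 2 * ε)
  have hleft : 2 * ε * (ε⁻¹ * S) = 2 * S := by field_simp
  have hright : 2 * ε * (ε / 2 * (ε⁻¹ ^ 2 * S + ∑ u, W u)) = S + ε ^ 2 * ∑ u, W u := by
    field_simp
  linarith

lemma sq_inv_sqrt_sub_inv_sqrt_le {D E τ : ℝ} (hτ : 0 < τ) (hD : 0 < D) (hE : τ ≤ E) :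
    ((√D)⁻¹ - (√E)⁻¹) ^ 2 ≤ (D - E) ^ 2 / D / τ ^ 2 := by
  have hE₀ : 0 < E := hτ.trans_le hE
  have hDsqrt : 0 < √D := sqrt_pos.2 hD
  have : 0 < √E := sqrt_pos.2 hE₀
  have hdiff : D - E = (√D - √E) * (√D + √E) := by
    nlinarith [mul_self_sqrt hD.le, mul_self_sqrt hE₀.le]
  have hτE : τ ^ 2 ≤ (√D + √E) ^ 2 * E := by
    calc τ ^ 2 ≤ √E ^ 2 * E := by rw [sq_sqrt hE₀.le, ← sq]; gcongr
      _ ≤ (√D + √E) ^ 2 * E := by gcongr; exact le_add_of_nonneg_left hDsqrt.le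
  calc ((√D)⁻¹ - (√E)⁻¹) ^ 2 = (√D - √E) ^ 2 / (√D ^ 2 * √E ^ 2) := by
        field_simp
        ring
    _ = (√D - √E) ^ 2 / D * (1 / E) := by rw [sq_sqrt hD.le, sq_sqrt hE₀.le]; field_simp
    _ ≤ (√D - √E) ^ 2 / D * ((√D + √E) ^ 2 / τ ^ 2) := by
        gcongr ?_ * ?_
        rwa [div_le_div_iff₀ hE₀ (by positivity), one_mul]
    _ = (D - E) ^ 2 / D / τ ^ 2 := by rw [hdiff]; ring

lemma abs_dotProduct_mulVec_le_of_abs_le {r : ℝ} (hR : ∀ u v, |R u v| ≤ r) (x y : ι → ℝ) :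
    |x ⬝ᵥ R *ᵥ y| ≤ r * ((∑ u, |x u|) * ∑ u, |y u|) := by
  rw [dotProduct_mulVec_eq_sum_sum, sum_mul_sum, mul_sum]
  refine (abs_sum_le_sum_abs _ _).trans (sum_le_sum fun u _ => ?_)
  rw [mul_sum]
  refine (abs_sum_le_sum_abs _ _).trans (sum_le_sum fun v _ => ?_)
  calc |x u * R u v * y v| = |R u v| * (|x u| * |y v|) := by rw [abs_mul, abs_mul]; ring
    _ ≤ r * (|x u| * |y v|) := by gcongr; exact hR u v

lemma sum_abs_mul_le {x : ι → ℝ} (hx : ∑ u, x u ^ 2 = 1) (f : ι → ℝ) :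
    ∑ u, |(f * x) u| ≤ √(∑ u, f u ^ 2) := by
  simpa [abs_mul, hx] using
    sum_mul_le_sqrt_mul_sqrt univ (fun u => |f u|) (fun u => |x u|)

lemma abs_dotProduct_mulVec_sub_le {r : ℝ} (hr : 0 ≤ r) (hR : ∀ u v, |R u v| ≤ r) {a b : ι → ℝ}
    {α δ : ℝ} (ha : ∑ u, a u ^ 2 ≤ α) (hb : ∑ u, b u ^ 2 ≤ α) (hab : ∑ u, (a u - b u) ^ 2 ≤ δ)
    {x y : ι → ℝ} (hx : ∑ u, x u ^ 2 = 1) (hy : ∑ u, y u ^ 2 = 1) :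
    |(a * x) ⬝ᵥ R *ᵥ (a * y) - (b * x) ⬝ᵥ R *ᵥ (b * y)| ≤ 2 * r * (√α * √δ) := by
  have hsplit : (a * x) ⬝ᵥ R *ᵥ (a * y) - (b * x) ⬝ᵥ R *ᵥ (b * y) =
      ((a - b) * x) ⬝ᵥ R *ᵥ (a * y) + (b * x) ⬝ᵥ R *ᵥ ((a - b) * y) := by
    simp only [sub_mul, mulVec_sub, dotProduct_sub, sub_dotProduct]
    ring
  have hbound {f g : ι → ℝ} {s t : ℝ} (hf : ∑ u, f u ^ 2 ≤ s) (hg : ∑ u, g u ^ 2 ≤ t) :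
      |(f * x) ⬝ᵥ R *ᵥ (g * y)| ≤ r * (√s * √t) := by
    refine (abs_dotProduct_mulVec_le_of_abs_le hR _ _).trans ?_
    gcongr
    exacts [(sum_abs_mul_le hx f).trans (sqrt_le_sqrt hf),
      (sum_abs_mul_le hy g).trans (sqrt_le_sqrt hg)]
  rw [hsplit]
  refine (abs_add_le _ _).trans ((add_le_add (hbound hab ha) (hbound hb hab)).trans_eq ?_)
  ring

end Stability

variable {n : ℕ}

/-- The coefficients by which the Laplacian of `M` rescales the coordinates. -/
noncomputable def invSqrtRowSum (M : Matrix (Fin n) (Fin n) ℝ) (u : Fin n) : ℝ :=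
  (√(∑ v, M u v))⁻¹

lemma invSqrtRowSum_sq {M : Matrix (Fin n) (Fin n) ℝ} {u : Fin n} (hM : 0 ≤ ∑ v, M u v) :
    invSqrtRowSum M u ^ 2 = (∑ v, M u v)⁻¹ := by
  rw [invSqrtRowSum, inv_pow, sq_sqrt hM]

lemma sum_invSqrtRowSum_sq_le {M : Matrix (Fin n) (Fin n) ℝ} {τ : ℝ} (hτ : 0 < τ)
    (hM : ∀ u, τ ≤ ∑ v, M u v) : ∑ u, invSqrtRowSum M u ^ 2 ≤ n / τ := by
  calc ∑ u, invSqrtRowSum M u ^ 2 ≤ ∑ _u : Fin n, τ⁻¹ := by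
        refine sum_le_sum fun u _ => ?_
        rw [invSqrtRowSum_sq (hτ.le.trans (hM u))]
        gcongr
        exact hM u
    _ = n / τ := by simp [div_eq_mul_inv]

lemma dotProduct_lap_mulVec {M : Matrix (Fin n) (Fin n) ℝ} (hM : ∀ u, 0 ≤ ∑ v, M u v)
    (x y : Fin n → ℝ) :
    x ⬝ᵥ lap M *ᵥ y = (invSqrtRowSum M * x) ⬝ᵥ M *ᵥ (invSqrtRowSum M * y) := by
  simp_rw [dotProduct_mulVec_eq_sum_sum]
  refine sum_congr rfl fun u _ => sum_congr rfl fun v _ => ?_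
  simp only [lap, invSqrtRowSum, Pi.mul_apply, sqrt_mul (hM u), div_eq_mul_inv, mul_inv]
  ring

lemma opNorm_le {M : Matrix (Fin n) (Fin n) ℝ} {C : ℝ} (hC : 0 ≤ C)
    (h : ∀ x y : Fin n → ℝ, ∑ u, x u ^ 2 = 1 → ∑ u, y u ^ 2 = 1 → |x ⬝ᵥ M *ᵥ y| ≤ C) :
    opNorm M ≤ C := by
  refine Real.sSup_le ?_ hC
  rintro t ⟨y, hy, rfl⟩
  set w := M *ᵥ y
  have hw : ∑ u, w u ^ 2 = sqnorm w ^ 2 := (sq_sqrt (sum_nonneg fun u _ => sq_nonneg _)).symm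
  have hw₀ : 0 ≤ sqnorm w := sqrt_nonneg _
  rcases hw₀.eq_or_lt with h₀ | hpos
  · rwa [← h₀]
  have hunit : ∑ u, ((sqnorm w)⁻¹ • w) u ^ 2 = 1 := by
    simp_rw [Pi.smul_apply, smul_eq_mul, mul_pow, ← mul_sum, hw]
    field_simp
  have hself : w ⬝ᵥ w = sqnorm w ^ 2 := by simp_rw [dotProduct, ← sq, hw]
  calc sqnorm w = ((sqnorm w)⁻¹ • w) ⬝ᵥ w := by
        rw [smul_dotProduct, hself, smul_eq_mul]
        field_simp
    _ ≤ C := (le_abs_self _).trans (h _ y hunit (sqrt_eq_one.1 hy))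

section Perturbation

variable {B R : Matrix (Fin n) (Fin n) ℝ} {W : Fin n → ℝ} {ε τ c : ℝ}

lemma sum_sq_invSqrtRowSum_sub_le (hsymm : (B - R).IsSymm) (hε : 0 < ε)
    (hq : QuadFormBounded (B - R) W ε) (hτ : 0 < τ) (hWB : ∀ u, W u ≤ ∑ v, B u v)
    (hB : ∀ u, τ ≤ ∑ v, B u v) (hR : ∀ u, τ ≤ ∑ v, R u v) (hW : ∑ u, W u ≤ c * (n * τ)) :
    ∑ u, (invSqrtRowSum B u - invSqrtRowSum R u) ^ 2 ≤ c * ε ^ 2 * (n / τ) := by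
  have hB₀ : ∀ u, 0 < ∑ v, B u v := fun u => hτ.trans_le (hB u)
  calc ∑ u, (invSqrtRowSum B u - invSqrtRowSum R u) ^ 2
      ≤ ∑ u, (∑ v, (B - R) u v) ^ 2 / (∑ v, B u v) / τ ^ 2 := by
        gcongr with u
        simp only [Matrix.sub_apply, sum_sub_distrib]
        exact sq_inv_sqrt_sub_inv_sqrt_le hτ (hB₀ u) (hR u)
    _ = (∑ u, (∑ v, (B - R) u v) ^ 2 / ∑ v, B u v) / τ ^ 2 := by rw [sum_div]
    _ ≤ ε ^ 2 * (c * (n * τ)) / τ ^ 2 := by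
        gcongr
        exact (hq.sum_rowSum_sq_div_le hsymm hε hB₀ hWB).trans (by gcongr)
    _ = c * ε ^ 2 * (n / τ) := by field_simp

lemma abs_rescaled_dotProduct_mulVec_le {M : Matrix (Fin n) (Fin n) ℝ} (hM : M.IsSymm)
    (hε : 0 ≤ ε) (hq : QuadFormBounded M W ε) (hB : ∀ u, 0 < ∑ v, B u v)
    (hWB : ∀ u, W u ≤ ∑ v, B u v) {x y : Fin n → ℝ} (hx : ∑ u, x u ^ 2 = 1)
    (hy : ∑ u, y u ^ 2 = 1) :
    |(invSqrtRowSum B * x) ⬝ᵥ M *ᵥ (invSqrtRowSum B * y)| ≤ ε := by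
  have hweight {z : Fin n → ℝ} (hz : ∑ u, z u ^ 2 = 1) :
      ∑ u, W u * (invSqrtRowSum B * z) u ^ 2 ≤ 1 := by
    rw [← hz]
    refine sum_le_sum fun u _ => ?_
    rw [Pi.mul_apply, mul_pow, invSqrtRowSum_sq (hB u).le, ← mul_assoc]
    exact mul_le_of_le_one_left (sq_nonneg _) (by
      rw [← div_eq_mul_inv]
      exact div_le_one_of_le₀ (hWB u) (hB u).le)
  calc _ ≤ ε / 2 * (1 + 1) := by
        refine (hq.abs_dotProduct_mulVec_le hM _ _).trans ?_
        gcongr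
        exacts [hweight hx, hweight hy]
    _ = ε := by ring

theorem opNorm_lap_sub_lap_le (hsymm : (B - R).IsSymm) (hε : 0 < ε)
    (hq : QuadFormBounded (B - R) W ε) (hτ : 0 < τ) (hWB : ∀ u, W u ≤ ∑ v, B u v)
    (hB : ∀ u, τ ≤ ∑ v, B u v) (hR : ∀ u, τ ≤ ∑ v, R u v) (hRτ : ∀ u v, |R u v| ≤ 2 * τ / n)
    (hW : ∑ u, W u ≤ c * (n * τ)) : opNorm (lap B - lap R) ≤ (1 + 4 * √c) * ε := by
  refine opNorm_le (by positivity) fun x y hx hy => ?_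
  set a := invSqrtRowSum B
  set b := invSqrtRowSum R
  have hsplit : x ⬝ᵥ (lap B - lap R) *ᵥ y = (a * x) ⬝ᵥ (B - R) *ᵥ (a * y) +
      ((a * x) ⬝ᵥ R *ᵥ (a * y) - (b * x) ⬝ᵥ R *ᵥ (b * y)) := by
    rw [sub_mulVec, dotProduct_sub, dotProduct_lap_mulVec fun u => hτ.le.trans (hB u),
      dotProduct_lap_mulVec fun u => hτ.le.trans (hR u), sub_mulVec, dotProduct_sub]
    ring
  have hperturb : |(a * x) ⬝ᵥ (B - R) *ᵥ (a * y)| ≤ ε :=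
    abs_rescaled_dotProduct_mulVec_le hsymm hε.le hq (fun u => hτ.trans_le (hB u)) hWB hx hy
  have hrescale : |(a * x) ⬝ᵥ R *ᵥ (a * y) - (b * x) ⬝ᵥ R *ᵥ (b * y)| ≤ 4 * √c * ε := by
    calc _ ≤ 2 * (2 * τ / n) * (√(n / τ) * √(c * ε ^ 2 * (n / τ))) :=
          abs_dotProduct_mulVec_sub_le (by positivity) hRτ (sum_invSqrtRowSum_sq_le hτ hB)
            (sum_invSqrtRowSum_sq_le hτ hR)
            (sum_sq_invSqrtRowSum_sub_le hsymm hε hq hτ hWB hB hR hW) hx hy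
      _ = 4 * √c * ε * ((τ / n) * (n / τ)) := by
          rw [sqrt_mul' _ (by positivity), sqrt_mul' _ (sq_nonneg ε), sqrt_sq hε.le]
          have := mul_self_sqrt (show 0 ≤ n / τ by positivity)
          linear_combination 4 * (τ / n) * √c * ε * this
      _ ≤ 4 * √c * ε := mul_le_of_le_one_right (by positivity) (by
          rw [div_mul_div_comm, mul_comm]
          exact div_self_le_one _)
  rw [hsplit]
  linarith [abs_add_le ((a * x) ⬝ᵥ (B - R) *ᵥ (a * y))
    ((a * x) ⬝ᵥ R *ᵥ (a * y) - (b * x) ⬝ᵥ R *ᵥ (b * y))]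

end Perturbation

end Laplacian

section RegularizedLaplacian

open Finset Matrix Real

variable {n : ℕ} {P : Matrix (Fin n) (Fin n) ℝ} {A : Adj n} {d K : ℝ}

lemma aVal_nonneg (A : Adj n) (u v : Fin n) : 0 ≤ aVal A u v := by
  unfold aVal
  positivity

lemma degree_nonneg (A : Adj n) (u : Fin n) : 0 ≤ degree A u :=
  sum_nonneg fun v _ => aVal_nonneg A u v

lemma sum_add_div_natCast (hn : n ≠ 0) (f : Fin n → ℝ) (τ : ℝ) :
    ∑ v, (f v + τ / n) = ∑ v, f v + τ := by
  rw [sum_add_distrib, sum_const, card_univ, Fintype.card_fin, nsmul_eq_mul,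
    mul_div_cancel₀ _ (Nat.cast_ne_zero.2 hn)]

lemma sum_row_le (hd : 0 ≤ d) (hPd : ∀ u v, P u v ≤ d / n) (u : Fin n) : ∑ v, P u v ≤ d := by
  calc ∑ v, P u v ≤ ∑ _v : Fin n, d / n := sum_le_sum fun v _ => hPd u v
    _ = n * (d / n) := by simp
    _ = d * (n / n) := mul_div_left_comm _ _ _
    _ ≤ d := mul_le_of_le_one_right hd (div_self_le_one _)

lemma sum_abs_adjMat_sub_le (hP : ∀ u v, 0 ≤ P u v) (hd : 0 ≤ d) (hPd : ∀ u v, P u v ≤ d / n)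
    (A : Adj n) (u : Fin n) : ∑ v, |(adjMat A - P) u v| ≤ degree A u + d := by
  calc ∑ v, |(adjMat A - P) u v| ≤ ∑ v, (aVal A u v + P u v) := by
        refine sum_le_sum fun v _ => (abs_sub _ _).trans_eq ?_
        rw [adjMat, abs_of_nonneg (aVal_nonneg A u v), abs_of_nonneg (hP u v)]
    _ ≤ degree A u + d := by
        rw [sum_add_distrib]
        exact add_le_add_right (sum_row_le hd hPd u) _

lemma discScale_self_le {n d : ℝ} (hn : 0 ≤ n) (hd : 1 ≤ d) : discScale n d n n ≤ 2 * (n * d) := by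
  have hsqrt : √(d * n * n * √(n / n)) ≤ n * d := by
    calc √(d * n * n * √(n / n)) ≤ √(d * n * n * 1) := by
          gcongr
          exact sqrt_le_one.2 (div_self_le_one n)
      _ ≤ √((n * d) ^ 2) := by
          gcongr
          linarith [mul_le_mul_of_nonneg_left (le_self_pow₀ hd two_ne_zero) (sq_nonneg n)]
      _ = n * d := sqrt_sq (by positivity)
  rw [discScale, max_self]
  linarith [le_mul_of_one_le_right hn hd]

lemma HasDiscrepancy.sum_degree_add_le (hdisc : HasDiscrepancy (adjMat A - P) d K) (hd : 1 ≤ d)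
    (hK : 0 ≤ K) (hPd : ∀ u v, P u v ≤ d / n) :
    ∑ u, (degree A u + d) ≤ (2 * K + 2) * (n * d) := by
  have hnoise : ∑ u, ∑ v, (adjMat A - P) u v ≤ K * (2 * (n * d)) := by
    have h := (le_abs_self _).trans (hdisc univ univ)
    rw [card_univ, Fintype.card_fin] at h
    exact h.trans (by gcongr; exact discScale_self_le (Nat.cast_nonneg n) hd)
  have hmean : ∑ u, ∑ v, P u v ≤ n * d := by
    refine (sum_le_sum fun u _ => sum_row_le (by positivity) hPd u).trans_eq ?_
    simp
  have hdegree : ∑ u, degree A u = ∑ u, ∑ v, (adjMat A - P) u v + ∑ u, ∑ v, P u v := by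
    simp [adjMat, degree]
  rw [sum_add_distrib, hdegree, sum_const, card_univ, Fintype.card_fin, nsmul_eq_mul]
  linarith

/-- The constant in the bound for the regularized Laplacian of a graph of discrepancy `K`. -/
noncomputable def lapConst (K : ℝ) : ℝ := (1 + 4 * √(2 * K + 2)) * quadConst K

lemma lapConst_pos (hK : 0 ≤ K) : 0 < lapConst K :=
  mul_pos (by positivity) (quadConst_pos hK)

lemma IsGraph.adjMat_sub_isSymm (hA : IsGraph A) (hsymm : ∀ u v, P u v = P v u) :
    (adjMat A - P).IsSymm :=
  IsSymm.ext fun u v => by simp only [Matrix.sub_apply, adjMat, hA.aVal_comm v u, hsymm v u]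

theorem HasDiscrepancy.opNorm_lap_addReg_sub_le (hdisc : HasDiscrepancy (adjMat A - P) d K)
    (hA : IsGraph A) (hsymm : ∀ u v, P u v = P v u) (hP : ∀ u v, 0 ≤ P u v) (hd : 1 ≤ d)
    (hK : 0 ≤ K) (hPd : ∀ u v, P u v ≤ d / n) {τ : ℝ} (hτ : d ≤ τ) :
    opNorm (lap (addReg A τ) - lap fun u v => P u v + τ / n) ≤ lapConst K * lapRate d := by
  have hd₀ : 0 ≤ d := by positivity
  have hτ₀ : 0 < τ := one_pos.trans_le (hd.trans hτ)
  have hn (u : Fin n) : n ≠ 0 := u.pos.ne'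
  have hrow (u : Fin n) : ∑ v, addReg A τ u v = degree A u + τ := sum_add_div_natCast (hn u) _ τ
  have hdiff : addReg A τ - Matrix.of (fun u v => P u v + τ / n) = adjMat A - P := by
    ext u v
    simp [addReg, adjMat]
  have hM := hA.adjMat_sub_isSymm hsymm
  have hq : QuadFormBounded (adjMat A - P) (fun u => degree A u + d) (quadConst K * lapRate d) :=
    hdisc.quadFormBounded hM hd hK (sum_abs_adjMat_sub_le hP hd₀ hPd A)
      fun u => le_add_of_nonneg_left (degree_nonneg A u)
  rw [← hdiff] at hM hq
  rw [lapConst, mul_assoc]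
  refine opNorm_lap_sub_lap_le hM (mul_pos (quadConst_pos hK) (lapRate_pos hd)) hq hτ₀
    (fun u => ?_) (fun u => ?_) (fun u => ?_) (fun u v => ?_) ?_
  · rw [hrow]
    gcongr
  · rw [hrow]
    exact le_add_of_nonneg_left (degree_nonneg A u)
  · rw [sum_add_div_natCast (hn u)]
    exact le_add_of_nonneg_left (sum_nonneg fun v _ => hP u v)
  · have hdτ : d / n ≤ τ / n := by gcongr
    rw [abs_of_nonneg (add_nonneg (hP u v) (by positivity)), mul_div_assoc]
    linarith [hPd u v]
  · exact (hdisc.sum_degree_add_le hd hK hPd).trans (by gcongr)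

lemma le_pmax (hP : ∀ u v, P u v ≤ 1) (u v : Fin n) : P u v ≤ pmax P := by
  refine le_csSup ⟨1, ?_⟩ ⟨u, v, rfl⟩
  rintro _ ⟨u, v, rfl⟩
  exact hP u v

lemma pmax_nonneg (hP : ∀ u v, 0 ≤ P u v) : 0 ≤ pmax P := by
  refine Real.sSup_nonneg ?_
  rintro _ ⟨u, v, rfl⟩
  exact hP u v

lemma one_le_natCast_mul_pmax_add_one (hP : ∀ u v, 0 ≤ P u v) : 1 ≤ n * pmax P + 1 :=
  le_add_of_nonneg_left (mul_nonneg n.cast_nonneg (pmax_nonneg hP))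

lemma le_natCast_mul_pmax_add_one_div (hP : ∀ u v, P u v ≤ 1) (u v : Fin n) :
    P u v ≤ (n * pmax P + 1) / n := by
  rw [le_div_iff₀' (Nat.cast_pos.2 u.pos)]
  calc n * P u v ≤ n * pmax P := by gcongr; exact le_pmax hP u v
    _ ≤ n * pmax P + 1 := le_add_of_nonneg_right zero_le_one

end RegularizedLaplacian

theorem statement_15_general (C' : ℝ) (hC' : 0 < C') :
    ∃ C : ℝ, 0 < C ∧ ∀ (n : ℕ) (P : Matrix (Fin n) (Fin n) ℝ),
      (∀ u v, P u v = P v u) → (∀ u v, 0 ≤ P u v ∧ P u v ≤ 1) →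
      ∀ d : ℝ, 1 ≤ d → (∀ u v, P u v ≤ d / n) →
        1 - (n : ℝ) ^ (-C') ≤ prob P
          { A | ∀ τ : ℝ, d ≤ τ →
              opNorm (lap (addReg A τ) - lap (fun u v => P u v + τ / n)) ≤
                C * Real.sqrt (Real.log (Real.exp 1 * d) / d) } := by
  have hK : 0 ≤ 8 * (C' + 4) + 2 + 1 := by positivity
  refine ⟨lapConst (8 * (C' + 4) + 2 + 1), lapConst_pos hK, fun n P hsymm hP d hd hPd => ?_⟩
  refine (one_sub_le_prob_hasDiscrepancy_noise hsymm hP (by positivity) hPd hC').trans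
    (prob_mono hP ?_)
  rintro A ⟨hA, hnoise⟩ τ hτ
  have hdisc : HasDiscrepancy (adjMat A - P) d (8 * (C' + 4) + 2 + 1) := by
    rw [adjMat_sub_eq_noise_add_diagonal hA]
    exact hnoise.add_diagonal fun u => by rw [abs_neg, abs_of_nonneg (hP u u).1]; exact (hP u u).2
  exact hdisc.opNorm_lap_addReg_sub_le hA hsymm (fun u v => (hP u v).1) hd hK hPd hτ

/-- Lemma 6 (operator norm bound for the regularized Laplacian). -/
theorem statement_15 (C' : ℝ) (hC' : 0 < C') :
    ∃ C C1 C2 : ℝ, 0 < C ∧ 0 < C1 ∧ C1 < C2 ∧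
      ∀ (n : ℕ) (P : Matrix (Fin n) (Fin n) ℝ),
        (∀ u v, P u v = P v u) → (∀ u v, 0 ≤ P u v ∧ P u v ≤ 1) →
        1 - (n : ℝ) ^ (-C') ≤ prob P
          { A | ∀ τ : ℝ, C1 * ((n : ℝ) * pmax P + 1) ≤ τ →
              τ ≤ C2 * ((n : ℝ) * pmax P + 1) →
              opNorm (lap (addReg A τ) - lap (fun u v => P u v + τ / n)) ≤
                C * Real.sqrt
                  (Real.log (Real.exp 1 * ((n : ℝ) * pmax P + 1)) /
                    ((n : ℝ) * pmax P + 1)) } := by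
  obtain ⟨C, hC, hprob⟩ := statement_15_general C' hC'
  refine ⟨C, 1, 2, hC, one_pos, one_lt_two, fun n P hsymm hP => ?_⟩
  exact (hprob n P hsymm hP _ (one_le_natCast_mul_pmax_add_one fun u v => (hP u v).1)
    (le_natCast_mul_pmax_add_one_div fun u v => (hP u v).2)).trans
    (prob_mono hP fun A hA τ hτ _ => hA τ (one_mul (n * pmax P + 1) ▸ hτ))

end SBM
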